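/- arXiv:1611.09279 — 8 statements merged into one kernel-verified Lean document; each statement's English description precedes it below -/
import Mathlib

section
/- If P and Q are partial orders on {1,…,n}, each a canonically labeled unit interval order, and P and Q are order-isomorphic, then P and Q have the same antiadjacency matrix; equivalently, for all i, j ∈ {1,…,n}: i <_P j if and only if i <_Q j. -/
open Classical in
/-- The altitude of `i`: `|{j : j ≤_P i}| - |{j : i ≤_P j}|`. -/
noncomputable def altitude {n : ℕ} (P : PartialOrder (Fin n)) (i : Fin n) : ℤ :=
  ((Finset.univ.filter (fun j : Fin n => P.le j i)).card : ℤ) -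
    ((Finset.univ.filter (fun j : Fin n => P.le i j)).card : ℤ)

/-- `P` is canonically labeled if `α(i) < α(j)` implies `i < j` as integers. -/
def IsCanonicallyLabeled {n : ℕ} (P : PartialOrder (Fin n)) : Prop :=
  ∀ i j : Fin n, altitude P i < altitude P j → i < j

/-!
If unit intervals represent `P` and the interval of `i` lies weakly to the left of that of `j`, then
everything below `i` is below `j` and everything above `j` is above `i`. Both terms of the altitude
are therefore monotone along the real line, and two elements of equal altitude have the same strict
predecessors and the same strict successors. An isomorphism `P ≅ Q` preserves altitudes, and in a
canonical labeling the altitudes form a weakly increasing sequence, so `P` and `Q` have the same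
altitude function. The isomorphism thus sends every label to one of the same altitude in `Q`, hence
with the same strict comparabilities.
-/

/-- The trace of a relation `r`: `j` has at least the `r`-predecessors of `i`, and `i` has at least
the `r`-successors of `j`. It is total when `r` is a unit interval order, where it compares the
positions of intervals up to elements with the same comparabilities. -/
def TraceLE {α : Type*} (r : α → α → Prop) (i j : α) : Prop :=
  (∀ k, r k i → r k j) ∧ ∀ k, r j k → r i k

section Trace

variable {α R : Type*} {r : α → α → Prop} [Add R] {q : α → R} {c : R}

theorem traceLE_of_le [Preorder R] [AddRightMono R] (hq : ∀ i j, r i j ↔ q i + c < q j) {i j : α}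
    (hij : q i ≤ q j) : TraceLE r i j := by
  simp only [TraceLE, hq]
  exact ⟨fun _ hk ↦ hk.trans_le hij, fun _ hk ↦ (add_le_add_left hij c).trans_lt hk⟩

theorem traceLE_total [LinearOrder R] [AddRightMono R] (hq : ∀ i j, r i j ↔ q i + c < q j)
    (i j : α) : TraceLE r i j ∨ TraceLE r j i :=
  (le_total (q i) (q j)).imp (traceLE_of_le hq) (traceLE_of_le hq)

end Trace

open Classical in
theorem card_filter_le_eq_card_filter_lt_add_one {α : Type*} [Fintype α] [PartialOrder α] (i : α) :
    (Finset.univ.filter (· ≤ i)).card = (Finset.univ.filter (· < i)).card + 1 := by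
  rw [← Finset.card_insert_of_notMem (a := i) (by simp)]
  congr 1
  ext j
  simp [le_iff_eq_or_lt]

theorem eq_of_comp_perm_eq_of_lt_imp_lt {n : ℕ} {α : Type*} [LinearOrder α] {a b : Fin n → α}
    (ha : ∀ i j, a i < a j → i < j) (hb : ∀ i j, b i < b j → i < j) {σ : Equiv.Perm (Fin n)}
    (h : b ∘ σ = a) : a = b := by
  have ha_mono : Monotone (b ∘ σ) := h ▸ fun i j ↦ le_imp_le_of_lt_imp_lt (ha j i)
  have hb_mono : Monotone (b ∘ Equiv.refl (Fin n)) := fun i j ↦ le_imp_le_of_lt_imp_lt (hb j i)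
  exact h.symm.trans (Tuple.unique_monotone ha_mono hb_mono)

section Altitude

variable {n : ℕ}

open Classical in
theorem altitude_eq_card_lt_sub_card_gt (P : PartialOrder (Fin n)) (i : Fin n) :
    altitude P i = ((Finset.univ.filter fun j ↦ P.lt j i).card : ℤ) -
      ((Finset.univ.filter fun j ↦ P.lt i j).card : ℤ) := by
  have hlower : (Finset.univ.filter fun j ↦ P.le j i).card =
      (Finset.univ.filter fun j ↦ P.lt j i).card + 1 :=
    @card_filter_le_eq_card_filter_lt_add_one _ _ P i
  have hupper : (Finset.univ.filter fun j ↦ P.le i j).card =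
      (Finset.univ.filter fun j ↦ P.lt i j).card + 1 :=
    @card_filter_le_eq_card_filter_lt_add_one _ _ (@OrderDual.instPartialOrder _ P) i
  rw [altitude, hlower, hupper]
  lia

variable {P Q : PartialOrder (Fin n)}

theorem altitude_apply_perm (e : Equiv.Perm (Fin n))
    (he : ∀ i j, P.le i j ↔ Q.le (e i) (e j)) (i : Fin n) : altitude Q (e i) = altitude P i := by
  classical
  rw [altitude, altitude, Finset.card_equiv e (s := Finset.univ.filter fun j ↦ P.le j i)
      (t := Finset.univ.filter fun j ↦ Q.le j (e i)) (by simp [he]),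
    Finset.card_equiv e (s := Finset.univ.filter fun j ↦ P.le i j)
      (t := Finset.univ.filter fun j ↦ Q.le (e i) j) (by simp [he])]

theorem altitude_eq_of_canonicallyLabeled (hP : IsCanonicallyLabeled P)
    (hQ : IsCanonicallyLabeled Q) (e : Equiv.Perm (Fin n))
    (he : ∀ i j, P.le i j ↔ Q.le (e i) (e j)) : altitude P = altitude Q :=
  eq_of_comp_perm_eq_of_lt_imp_lt hP hQ (funext (altitude_apply_perm e he))

theorem TraceLE.symm_of_altitude_le {i j : Fin n} (hij : TraceLE P.lt i j)
    (h : altitude P j ≤ altitude P i) : TraceLE P.lt j i := by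
  classical
  rw [altitude_eq_card_lt_sub_card_gt, altitude_eq_card_lt_sub_card_gt] at h
  have hlower := Finset.monotone_filter_right Finset.univ fun k _ ↦ hij.1 k
  have hupper := Finset.monotone_filter_right Finset.univ fun k _ ↦ hij.2 k
  have hlower_card := Finset.card_le_card hlower
  have hupper_card := Finset.card_le_card hupper
  have hlower_eq := Finset.eq_of_subset_of_card_le hlower (by lia)
  have hupper_eq := Finset.eq_of_subset_of_card_le hupper (by lia)
  simp only [Finset.ext_iff, Finset.mem_filter_univ] at hlower_eq hupper_eq
  exact ⟨fun k ↦ (hlower_eq k).2, fun k ↦ (hupper_eq k).2⟩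

theorem traceLE_of_altitude_le (htotal : ∀ i j, TraceLE P.lt i j ∨ TraceLE P.lt j i) {i j : Fin n}
    (h : altitude P i ≤ altitude P j) : TraceLE P.lt i j :=
  (htotal i j).elim id fun hji ↦ hji.symm_of_altitude_le h

theorem lt_iff_lt_of_altitude_eq (htotal : ∀ i j, TraceLE P.lt i j ∨ TraceLE P.lt j i)
    {i j i' j' : Fin n} (hi : altitude P i = altitude P i') (hj : altitude P j = altitude P j') :
    P.lt i j ↔ P.lt i' j' :=
  ⟨fun h ↦ (traceLE_of_altitude_le htotal hj.le).1 _
      ((traceLE_of_altitude_le htotal hi.ge).2 _ h),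
    fun h ↦ (traceLE_of_altitude_le htotal hj.ge).1 _
      ((traceLE_of_altitude_le htotal hi.le).2 _ h)⟩

end Altitude

/-- Two order-isomorphic canonically labeled unit interval orders on `{1,…,n}` have the same
antiadjacency matrix, i.e. the same strict order relation. -/
theorem eq_of_canonical_iso
    {n : ℕ} (P Q : PartialOrder (Fin n))
    (hP : ∃ q : Fin n → ℝ, ∀ i j : Fin n, P.lt i j ↔ q i + 1 < q j)
    (hQ : ∃ q : Fin n → ℝ, ∀ i j : Fin n, Q.lt i j ↔ q i + 1 < q j)
    (hPc : IsCanonicallyLabeled P) (hQc : IsCanonicallyLabeled Q)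
    (hiso : ∃ f : Fin n → Fin n, Function.Bijective f ∧
      ∀ i j : Fin n, P.le i j ↔ Q.le (f i) (f j)) :
    ∀ i j : Fin n, P.lt i j ↔ Q.lt i j := by
  obtain ⟨f, hf, hle⟩ := hiso
  obtain ⟨q, hq⟩ := hQ
  let e : Equiv.Perm (Fin n) := Equiv.ofBijective f hf
  have halt : ∀ i, altitude Q (f i) = altitude Q i := fun i ↦
    (altitude_apply_perm e hle i).trans
      (congrFun (altitude_eq_of_canonicallyLabeled hPc hQc e hle) i)
  intro i j
  calc
    P.lt i j ↔ Q.lt (f i) (f j) := by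
      rw [P.lt_iff_le_not_ge, Q.lt_iff_le_not_ge, hle, hle]
    _ ↔ Q.lt i j := lt_iff_lt_of_altitude_eq (traceLE_total hq) (halt i) (halt j)
end

section
/- For every n × n Dyck matrix A, the relation i <_A j defined by a_{i,j} = 0 is a strict partial order on {1,…,n} which makes {1,…,n} a unit interval order whose antiadjacency matrix is A. Moreover, every partial order on {1,…,n} that is a unit interval order is order-isomorphic to the order <_A determined by exactly one n × n Dyck matrix A; hence isomorphism classes of unit interval orders of cardinality n are in bijection with n × n Dyck matrices. -/
/-- A 0/1 matrix is a Dyck matrix: ones on and below the diagonal, and the zero entries form a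
right-justified Young diagram anchored at the upper-right corner. -/
def IsDyckMatrix {n : ℕ} (A : Matrix (Fin n) (Fin n) ℝ) : Prop :=
  (∀ i j : Fin n, A i j = 0 ∨ A i j = 1) ∧
  (∀ i j : Fin n, (j : ℕ) ≤ (i : ℕ) → A i j = 1) ∧
  (∀ i j i' j' : Fin n, A i j = 0 → (i' : ℕ) ≤ (i : ℕ) → (j : ℕ) ≤ (j' : ℕ) → A i' j' = 0)

/-!
Call a relation on a linear order a staircase if it is closed under moving the first argument down
and the second one up. The zero entries of a Dyck matrix form an irreflexive staircase.

An irreflexive staircase is represented by unit intervals placed from left to right: as long as no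
two of them just touch, the conditions on the left endpoint of the next interval are strict
inequalities cutting out a nonempty open gap. Conversely, listing unit intervals by increasing left
endpoint turns their order into an irreflexive staircase, the zero pattern of a Dyck matrix.

A staircase on `Fin n` is determined by the number of entries of each row lying outside it. These
numbers increase from row to row, and an isomorphism merely permutes them, so they agree for
isomorphic staircases.
-/

/-- A staircase relation: the pairs it relates form a Young diagram justified to the upper right,
when the first argument indexes rows and the second one columns. -/
def IsStaircase {α : Type*} [LE α] (r : α → α → Prop) : Prop :=
  ∀ ⦃i j i' j' : α⦄, r i j → i' ≤ i → j ≤ j' → r i' j'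

/-- The unit intervals `[q i, q i + 1]` represent `r`: `i` is related to `j` exactly when the
interval of `i` lies strictly to the left of that of `j`. -/
def IsUnitIntervalRep {α K : Type*} [Add K] [One K] [LT K] (r : α → α → Prop) (q : α → K) : Prop :=
  ∀ i j, r i j ↔ q i + 1 < q j

/-- The relation `i <_A j` of a matrix `A`, defined by its zero entries. -/
def zeroRel {m R : Type*} [Zero R] (A : Matrix m m R) (i j : m) : Prop := A i j = 0

instance {m R : Type*} [Zero R] [DecidableEq R] (A : Matrix m m R) : DecidableRel (zeroRel A) :=
  fun i j => inferInstanceAs (Decidable (A i j = 0))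

/-- The antiadjacency matrix of a relation, with entry `0` at related pairs and `1` elsewhere. -/
def antiadjacencyMatrix {α : Type*} (R : Type*) [Zero R] [One R] (r : α → α → Prop)
    [DecidableRel r] : Matrix α α R :=
  Matrix.of fun i j => if r i j then 0 else 1

theorem nonempty_relIso_iff_exists_bijective {α β : Type*} {r : α → α → Prop}
    {s : β → β → Prop} :
    Nonempty (r ≃r s) ↔
      ∃ f : α → β, Function.Bijective f ∧ ∀ i j, r i j ↔ s (f i) (f j) :=
  ⟨fun ⟨e⟩ => ⟨e, e.bijective, fun _ _ => e.map_rel_iff.symm⟩,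
    fun ⟨f, hf, h⟩ => ⟨⟨Equiv.ofBijective f hf, (h _ _).symm⟩⟩⟩

theorem zeroRel_antiadjacencyMatrix {α R : Type*} [Zero R] [One R] [NeZero (1 : R)]
    (r : α → α → Prop) [DecidableRel r] : zeroRel (antiadjacencyMatrix R r) = r := by
  ext i j
  simp [zeroRel, antiadjacencyMatrix]

theorem exists_equiv_monotone_comp {α β : Type*} [Finite α] [LinearOrder β] {n : ℕ}
    (hα : Nat.card α = n) (q : α → β) : ∃ e : Fin n ≃ α, Monotone (q ∘ e) :=
  let e := (Finite.equivFinOfCardEq hα).symm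
  ⟨(Tuple.sort (q ∘ e)).trans e, Tuple.monotone_sort (q ∘ e)⟩

namespace IsStaircase

variable {α : Type*} [LinearOrder α] {r : α → α → Prop}

theorem lt (hr : IsStaircase r) (hirr : ∀ i, ¬ r i i) {i j : α} (h : r i j) : i < j :=
  lt_of_not_ge fun hji => hirr i (hr h le_rfl hji)

theorem trans (hr : IsStaircase r) (hirr : ∀ i, ¬ r i i) {i j k : α} (hij : r i j)
    (hjk : r j k) : r i k :=
  hr hij le_rfl (hr.lt hirr hjk).le

end IsStaircase

/-- An increasing unit interval representation of `r` on `s` in which no two intervals just touch: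
this is what makes room for one more interval on the right. -/
structure IsGenericUnitIntervalRepOn {α K : Type*} [Preorder α] [Add K] [One K] [Preorder K]
    (r : α → α → Prop) (q : α → K) (s : Finset α) : Prop where
  strictMonoOn : StrictMonoOn q s
  add_one_lt : ∀ i ∈ s, ∀ j ∈ s, r i j → q i + 1 < q j
  lt_add_one : ∀ i ∈ s, ∀ j ∈ s, ¬ r i j → q j < q i + 1

section Representation

variable {α K : Type*} [LinearOrder α] [Ring K] [LinearOrder K] [IsStrictOrderedRing K]
  {r : α → α → Prop} {q : α → K}

theorem IsGenericUnitIntervalRepOn.update_insert {s : Finset α} {m : α} {c : K}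
    (hq : IsGenericUnitIntervalRepOn r q s) (hlt : ∀ ⦃i j⦄, r i j → i < j)
    (hm : ∀ i ∈ s, i < m) (hc : ∀ i ∈ s, q i < c) (hrc : ∀ i ∈ s, r i m → q i + 1 < c)
    (hnrc : ∀ i ∈ s, ¬ r i m → c < q i + 1) :
    IsGenericUnitIntervalRepOn r (Function.update q m c) (insert m s) := by
  have update_mem : ∀ i ∈ s, Function.update q m c i = q i := fun i hi =>
    Function.update_of_ne (hm i hi).ne ..
  constructor
  · have lt_of_lt : ∀ i ∈ s, ∀ j ∈ s, i < j → q i < q j := fun _ hi _ hj => hq.strictMonoOn hi hj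
    simp only [StrictMonoOn, Finset.mem_coe]
    grind
  · grind [hq.add_one_lt]
  · grind [hq.lt_add_one]

variable [DenselyOrdered K]

theorem IsGenericUnitIntervalRepOn.exists_next {s : Finset α} {m : α}
    (hq : IsGenericUnitIntervalRepOn r q s) (hr : IsStaircase r) (hm : ∀ i ∈ s, i < m) :
    ∃ c, (∀ i ∈ s, q i < c) ∧ (∀ i ∈ s, r i m → q i + 1 < c) ∧
      ∀ i ∈ s, ¬ r i m → c < q i + 1 := by
  classical
  let lower := s.image q ∪ (s.filter (r · m)).image (q · + 1)
  let upper := (s.filter (¬ r · m)).image (q · + 1)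
  have lower_lt_upper : ∀ x ∈ lower, ∀ y ∈ upper, x < y := by
    simp only [lower, upper, Finset.mem_union, Finset.mem_image, Finset.mem_filter]
    rintro _ (⟨i, hi, rfl⟩ | ⟨i, ⟨hi, him⟩, rfl⟩) _ ⟨k, ⟨hk, hkm⟩, rfl⟩
    · exact hq.lt_add_one k hk i hi fun hki => hkm (hr hki le_rfl (hm i hi).le)
    · have hik : i < k := lt_of_not_ge fun hki => hkm (hr him hki le_rfl)
      exact add_lt_add_left (hq.strictMonoOn hi hk hik) 1
  obtain ⟨c, hlower, hupper⟩ := Order.exists_between_finsets lower upper lower_lt_upper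
  simp only [lower, upper, Finset.mem_union, Finset.mem_image, Finset.mem_filter] at hlower hupper
  exact ⟨c, fun i hi => hlower _ (.inl ⟨i, hi, rfl⟩),
    fun i hi him => hlower _ (.inr ⟨i, ⟨hi, him⟩, rfl⟩),
    fun i hi him => hupper _ ⟨i, ⟨hi, him⟩, rfl⟩⟩

theorem IsStaircase.exists_isGenericUnitIntervalRepOn (hr : IsStaircase r)
    (hirr : ∀ i, ¬ r i i) (s : Finset α) :
    ∃ q : α → K, IsGenericUnitIntervalRepOn r q s := by
  induction s using Finset.induction_on_max with
  | empty => exact ⟨0, by constructor <;> simp [StrictMonoOn]⟩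
  | insert m s hm ih =>
    obtain ⟨q, hq⟩ := ih
    obtain ⟨c, hc, hrc, hnrc⟩ := hq.exists_next hr hm
    exact ⟨_, hq.update_insert (fun _ _ => hr.lt hirr) hm hc hrc hnrc⟩

theorem IsStaircase.exists_isUnitIntervalRep [Finite α] (hr : IsStaircase r)
    (hirr : ∀ i, ¬ r i i) : ∃ q : α → K, IsUnitIntervalRep r q := by
  cases nonempty_fintype α
  obtain ⟨q, hq⟩ := hr.exists_isGenericUnitIntervalRepOn (K := K) hirr Finset.univ
  have hmem (i : α) : i ∈ Finset.univ := Finset.mem_univ i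
  refine ⟨q, fun i j => ⟨hq.add_one_lt i (hmem i) j (hmem j), fun h => ?_⟩⟩
  by_contra hij
  exact h.not_gt (hq.lt_add_one i (hmem i) j (hmem j) hij)

end Representation

namespace IsUnitIntervalRep

variable {α K : Type*} [Semiring K] [PartialOrder K] [IsStrictOrderedRing K]
  {r : α → α → Prop} {q : α → K}

theorem irrefl (h : IsUnitIntervalRep r q) (i : α) : ¬ r i i := fun hi =>
  ((h i i).1 hi).not_gt (lt_add_one (q i))

theorem isStaircase [Preorder α] (h : IsUnitIntervalRep r q) (hq : Monotone q) :
    IsStaircase r := fun i j i' j' hij hi hj =>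
  (h i' j').2 <| calc
    q i' + 1 ≤ q i + 1 := add_le_add_left (hq hi) 1
    _ < q j := (h i j).1 hij
    _ ≤ q j' := hq hj

end IsUnitIntervalRep

section RowLength

variable {α β : Type*} [Fintype α] [Fintype β] {r : α → α → Prop} {s : β → β → Prop}

open Classical in
/-- The number of entries of row `i` outside the relation `r`. For a staircase on `Fin n` this is
the column at which the Dyck path crosses row `i`. -/
noncomputable def rowLength (r : α → α → Prop) (i : α) : ℕ :=
  Finset.card {j | ¬ r i j}

theorem IsStaircase.monotone_rowLength [Preorder α] (hr : IsStaircase r) :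
    Monotone (rowLength r) := by
  classical
  exact fun _ _ hi => Finset.card_le_card <|
    Finset.monotone_filter_right _ fun _ _ hj h => hj (hr h hi le_rfl)

theorem rowLength_comp_relIso (e : r ≃r s) : rowLength s ∘ e = rowLength r := by
  classical
  ext i
  simp only [rowLength, Function.comp_apply]
  exact (Finset.card_equiv e.toEquiv (by simp [e.map_rel_iff])).symm

end RowLength

section Uniqueness

variable {n : ℕ} {r s : Fin n → Fin n → Prop}

theorem IsStaircase.rowLength_le_iff (hr : IsStaircase r) {i j : Fin n} :
    rowLength r i ≤ j ↔ r i j := by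
  classical
  have lt_iff : j < rowLength r i ↔ ¬ r i j :=
    Fin.lt_card_filter_univ_iff_apply_of_imp (¬ r i ·)
      fun j k hkj hj hk => hj (hr hk le_rfl hkj)
  rw [← not_lt, lt_iff, not_not]

theorem IsStaircase.eq_of_relIso (hr : IsStaircase r) (hs : IsStaircase s) (e : r ≃r s) :
    r = s := by
  have rowLength_eq : rowLength r = rowLength s := by
    have hmono : Monotone (rowLength s ∘ e.toEquiv) :=
      (rowLength_comp_relIso e).symm ▸ hr.monotone_rowLength
    exact (rowLength_comp_relIso e).symm.trans <|
      Tuple.unique_monotone (τ := 1) hmono hs.monotone_rowLength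
  ext i j
  rw [← hr.rowLength_le_iff, ← hs.rowLength_le_iff, rowLength_eq]

end Uniqueness

theorem IsStaircase.isDyckMatrix_antiadjacencyMatrix {n : ℕ} {r : Fin n → Fin n → Prop}
    [DecidableRel r] (hr : IsStaircase r) (hirr : ∀ i, ¬ r i i) :
    IsDyckMatrix (antiadjacencyMatrix ℝ r) := by
  refine ⟨fun i j => ite_eq_or_eq .., fun i j hji => if_neg fun hij => ?_, ?_⟩
  · exact hji.not_gt (hr.lt hirr hij)
  · change IsStaircase (zeroRel (antiadjacencyMatrix ℝ r))
    rwa [zeroRel_antiadjacencyMatrix]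

namespace IsDyckMatrix

variable {n : ℕ} {A B : Matrix (Fin n) (Fin n) ℝ}

theorem isStaircase (hA : IsDyckMatrix A) : IsStaircase (zeroRel A) := hA.2.2

theorem irrefl (hA : IsDyckMatrix A) (i : Fin n) : ¬ zeroRel A i i := by
  simp [zeroRel, hA.2.1 i i le_rfl]

theorem antiadjacencyMatrix_zeroRel (hA : IsDyckMatrix A) :
    antiadjacencyMatrix ℝ (zeroRel A) = A := by
  ext i j
  rcases hA.1 i j with h | h <;> simp [zeroRel, antiadjacencyMatrix, h]

theorem eq_of_relIso (hA : IsDyckMatrix A) (hB : IsDyckMatrix B) (e : zeroRel A ≃r zeroRel B) :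
    A = B := by
  have zeroRel_eq : zeroRel A = zeroRel B := hA.isStaircase.eq_of_relIso hB.isStaircase e
  rw [← hA.antiadjacencyMatrix_zeroRel, ← hB.antiadjacencyMatrix_zeroRel]
  ext i j
  exact if_congr (iff_of_eq (congrFun₂ zeroRel_eq i j)) rfl rfl

end IsDyckMatrix

theorem IsUnitIntervalRep.exists_isDyckMatrix_relIso {α K : Type*} [Finite α] [Semiring K]
    [LinearOrder K] [IsStrictOrderedRing K] {n : ℕ} (hα : Nat.card α = n) {r : α → α → Prop}
    {q : α → K} (h : IsUnitIntervalRep r q) :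
    ∃ A : Matrix (Fin n) (Fin n) ℝ, IsDyckMatrix A ∧ Nonempty (r ≃r zeroRel A) := by
  classical
  obtain ⟨e, hmono⟩ := exists_equiv_monotone_comp hα q
  have hsorted : IsUnitIntervalRep (e ⁻¹'o r) (q ∘ e) := fun i j => h (e i) (e j)
  refine ⟨antiadjacencyMatrix ℝ (e ⁻¹'o r),
    (hsorted.isStaircase hmono).isDyckMatrix_antiadjacencyMatrix hsorted.irrefl, ?_⟩
  rw [zeroRel_antiadjacencyMatrix]
  exact ⟨(RelIso.preimage e r).symm⟩

theorem dyckMatrix_orders_and_unique_representative_general {K : Type*} [Ring K]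
    [LinearOrder K] [IsStrictOrderedRing K] [DenselyOrdered K] (n : ℕ) :
    (∀ A : Matrix (Fin n) (Fin n) ℝ, IsDyckMatrix A →
      (∀ i, ¬ zeroRel A i i) ∧
      (∀ i j k, zeroRel A i j → zeroRel A j k → zeroRel A i k) ∧
      (∃ q : Fin n → K, IsUnitIntervalRep (zeroRel A) q) ∧
      antiadjacencyMatrix ℝ (zeroRel A) = A) ∧
    (∀ (α : Type*) [Finite α], Nat.card α = n → ∀ r : α → α → Prop,
      (∃ q : α → K, IsUnitIntervalRep r q) →
      ∃! A : Matrix (Fin n) (Fin n) ℝ, IsDyckMatrix A ∧ Nonempty (r ≃r zeroRel A)) := by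
  constructor
  · intro A hA
    exact ⟨hA.irrefl, fun i j k => hA.isStaircase.trans hA.irrefl,
      hA.isStaircase.exists_isUnitIntervalRep hA.irrefl, hA.antiadjacencyMatrix_zeroRel⟩
  · rintro α _ hα r ⟨q, hq⟩
    obtain ⟨A, hA, ⟨eA⟩⟩ := hq.exists_isDyckMatrix_relIso hα
    refine ⟨A, ⟨hA, ⟨eA⟩⟩, ?_⟩
    rintro B ⟨hB, ⟨eB⟩⟩
    exact hB.eq_of_relIso hA (eB.symm.trans eA)

open Classical in
/-- Every Dyck matrix determines (via its zero entries) a strict partial order on `{1,…,n}` which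
is a unit interval order with antiadjacency matrix `A`; and every unit interval order on
`{1,…,n}` is order-isomorphic to the order of exactly one Dyck matrix. -/
theorem dyckMatrix_orders_and_unique_representative (n : ℕ) :
    (∀ A : Matrix (Fin n) (Fin n) ℝ, IsDyckMatrix A →
      (∀ i : Fin n, ¬ A i i = 0) ∧
      (∀ i j k : Fin n, A i j = 0 → A j k = 0 → A i k = 0) ∧
      (∃ q : Fin n → ℝ, ∀ i j : Fin n, A i j = 0 ↔ q i + 1 < q j) ∧
      (Matrix.of fun i j : Fin n => if A i j = 0 then (0 : ℝ) else 1) = A) ∧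
    (∀ P : PartialOrder (Fin n),
      (∃ q : Fin n → ℝ, ∀ i j : Fin n, P.lt i j ↔ q i + 1 < q j) →
      ∃! A : Matrix (Fin n) (Fin n) ℝ, IsDyckMatrix A ∧
        ∃ f : Fin n → Fin n, Function.Bijective f ∧
          ∀ i j : Fin n, P.lt i j ↔ A (f i) (f j) = 0) := by
  obtain ⟨orders, representatives⟩ := dyckMatrix_orders_and_unique_representative_general (K := ℝ) n
  refine ⟨orders, fun P hP => ?_⟩
  have h := representatives (Fin n) (Nat.card_fin n) P.lt hP
  simpa only [nonempty_relIso_iff_exists_bijective, zeroRel] using h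
end

section
/- Let A be an n × n Dyck matrix regarded as a matrix with real entries. Then A is totally nonnegative: for every k ≥ 1 and all strictly increasing maps f, g : {1,…,k} → {1,…,n}, the determinant of the k × k submatrix (a_{f(s), g(t)})_{1 ≤ s,t ≤ k} is nonnegative. -/
/-!
A minor of a staircase 0/1 matrix is again the determinant of a staircase matrix, so it suffices to
expand such a determinant along its top row. A column whose top entry is `1` consists of ones.
Hence the determinant vanishes if the top row is zero or has at least two ones; otherwise the top
row is `(1, 0, …, 0)`, and deleting the first row and column leaves a smaller staircase matrix with
the same determinant. So every minor is `0` or `1`.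
-/

/-- A matrix with entries in `{0, 1}` whose zeros are closed under moving up and to the right, so
that the zeros form a right-justified Young diagram in the upper-right corner. Dyck matrices
moreover have ones on and below the diagonal; dropping this makes the notion stable under passing to
submatrices. -/
structure IsStaircaseMatrix {m n R : Type*} [LE m] [LE n] [Zero R] [One R]
    (A : Matrix m n R) : Prop where
  eq_zero_or_eq_one : ∀ i j, A i j = 0 ∨ A i j = 1
  eq_zero_of_le : ∀ {i i' j j'}, A i j = 0 → i' ≤ i → j ≤ j' → A i' j' = 0

theorem IsDyckMatrix.isStaircaseMatrix {n : ℕ} {A : Matrix (Fin n) (Fin n) ℝ}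
    (hA : IsDyckMatrix A) : IsStaircaseMatrix A where
  eq_zero_or_eq_one := hA.1
  eq_zero_of_le := hA.2.2 _ _ _ _

theorem det_eq_mul_det_submatrix_succ_of_row_zero {R : Type*} [CommRing R] {k : ℕ}
    (A : Matrix (Fin (k + 1)) (Fin (k + 1)) R) (hrow : ∀ j : Fin k, A 0 j.succ = 0) :
    A.det = A 0 0 * (A.submatrix Fin.succ Fin.succ).det := by
  simp [Matrix.det_succ_row_zero, Fin.sum_univ_succ, hrow]

namespace IsStaircaseMatrix

theorem submatrix {m n m' n' R : Type*} [Preorder m] [Preorder n] [Preorder m'] [Preorder n']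
    [Zero R] [One R] {A : Matrix m n R} (hA : IsStaircaseMatrix A) {f : m' → m} {g : n' → n}
    (hf : Monotone f) (hg : Monotone g) : IsStaircaseMatrix (A.submatrix f g) where
  eq_zero_or_eq_one i j := hA.eq_zero_or_eq_one (f i) (g j)
  eq_zero_of_le h hi hj := hA.eq_zero_of_le h (hf hi) (hg hj)

theorem eq_one_of_le {m n R : Type*} [LE m] [Preorder n] [Zero R] [One R] {A : Matrix m n R}
    (hA : IsStaircaseMatrix A) {i i' : m} {j : n} (h : A i j = 1) (hi : i ≤ i') : A i' j = 1 := by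
  rcases hA.eq_zero_or_eq_one i' j with h' | h'
  · calc A i' j = 0 := h'
      _ = A i j := (hA.eq_zero_of_le h' hi le_rfl).symm
      _ = 1 := h
  · exact h'

variable {R : Type*} [CommRing R]

theorem det_eq_zero_of_zero_zero {k : ℕ} {A : Matrix (Fin (k + 1)) (Fin (k + 1)) R}
    (hA : IsStaircaseMatrix A) (h : A 0 0 = 0) : A.det = 0 :=
  Matrix.det_eq_zero_of_row_eq_zero 0 fun j => hA.eq_zero_of_le h le_rfl (Fin.zero_le j)

theorem det_eq_zero_of_row_zero_eq_one {k : ℕ} {A : Matrix (Fin (k + 1)) (Fin (k + 1)) R}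
    (hA : IsStaircaseMatrix A) {j j' : Fin (k + 1)} (hne : j ≠ j') (hj : A 0 j = 1)
    (hj' : A 0 j' = 1) : A.det = 0 :=
  Matrix.det_zero_of_column_eq hne fun i =>
    (hA.eq_one_of_le hj (Fin.zero_le i)).trans (hA.eq_one_of_le hj' (Fin.zero_le i)).symm

theorem det_eq_zero_or_eq_one {k : ℕ} {A : Matrix (Fin k) (Fin k) R}
    (hA : IsStaircaseMatrix A) : A.det = 0 ∨ A.det = 1 := by
  induction k with
  | zero => exact .inr Matrix.det_fin_zero
  | succ k ih =>
    rcases hA.eq_zero_or_eq_one 0 0 with h00 | h00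
    · exact .inl (hA.det_eq_zero_of_zero_zero h00)
    by_cases hone : ∃ j : Fin k, A 0 j.succ = 1
    · obtain ⟨j, hj⟩ := hone
      exact .inl (hA.det_eq_zero_of_row_zero_eq_one (Fin.succ_ne_zero j) hj h00)
    · have hrow (j : Fin k) : A 0 j.succ = 0 :=
        (hA.eq_zero_or_eq_one 0 j.succ).resolve_right fun hj => hone ⟨j, hj⟩
      rw [det_eq_mul_det_submatrix_succ_of_row_zero A hrow, h00, one_mul]
      have hsucc : Monotone (Fin.succ : Fin k → Fin (k + 1)) := Fin.strictMono_succ.monotone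
      exact ih (hA.submatrix hsucc hsucc)

end IsStaircaseMatrix

theorem dyckMatrix_totally_nonnegative_general {m n R : Type*} [Preorder m] [Preorder n]
    [CommRing R] {A : Matrix m n R} (hA : IsStaircaseMatrix A) {k : ℕ} {f : Fin k → m}
    {g : Fin k → n} (hf : Monotone f) (hg : Monotone g) :
    (A.submatrix f g).det = 0 ∨ (A.submatrix f g).det = 1 :=
  (hA.submatrix hf hg).det_eq_zero_or_eq_one

/-- Every Dyck matrix, regarded as a real matrix, is totally nonnegative: every minor on
strictly increasing row and column index sets is nonnegative. -/
theorem dyckMatrix_totally_nonnegative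
    {n : ℕ} (A : Matrix (Fin n) (Fin n) ℝ) (hA : IsDyckMatrix A) :
    ∀ (k : ℕ), 1 ≤ k → ∀ f g : Fin k → Fin n, StrictMono f → StrictMono g →
      0 ≤ (A.submatrix f g).det := by
  intro k _ f g hf hg
  rcases dyckMatrix_totally_nonnegative_general hA.isStaircaseMatrix hf.monotone hg.monotone
    with h | h <;> simp [h]
end

section
/- Let A = (a_{i,j}) be an n × n real matrix and B = ψ(A). For all subsets I, J of {1,…,n} with |I| = |J|, let K = { n+1−k : k ∈ {1,…,n} \ I } ∪ { n+j : j ∈ J }, an n-element subset of {1,…,2n}. Then Δ_{I,J}(A) = Δ_{{1,…,n},K}(B), i.e., the minor of A on row set I and column set J (rows and columns listed in increasing order) equals the determinant of the n × n submatrix of B on column set K (columns listed in increasing order). -/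
/-- Postnikov's map `ψ`: the `n × 2n` matrix whose first `n` columns form the identity and whose
entry in row `i`, column `n + j` (1-based) is `(-1)^(n-i) * a_{n+1-i, j}`.  Here rows and columns
are 0-based: row `i` and column `c` correspond to 1-based indices `i+1` and `c+1`. -/
noncomputable def psiMat {n : ℕ} (A : Matrix (Fin n) (Fin n) ℝ) :
    Matrix (Fin n) (Fin (2 * n)) ℝ :=
  Matrix.of fun i c =>
    if hc : (c : ℕ) < n then (if (i : ℕ) = (c : ℕ) then 1 else 0)
    else (-1 : ℝ) ^ (n - 1 - (i : ℕ)) *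
      A ⟨n - 1 - (i : ℕ), by have := i.isLt; omega⟩ ⟨(c : ℕ) - n, by have := c.isLt; omega⟩

/-- The column set `K = {n+1-k : k ∈ [n] \ I} ∪ {n+j : j ∈ J}` of `{1,…,2n}`, written with
0-based indices: `k ∈ [n] \ I` (0-based `x`) contributes `n-1-x` and `j ∈ J` (0-based `x`)
contributes `n+x`. -/
def KSet {n : ℕ} (I J : Finset (Fin n)) : Finset (Fin (2 * n)) :=
  (Iᶜ.image fun x : Fin n =>
      (⟨n - 1 - (x : ℕ), by have := x.isLt; omega⟩ : Fin (2 * n))) ∪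
  (J.image fun x : Fin n => (⟨n + (x : ℕ), by have := x.isLt; omega⟩ : Fin (2 * n)))

/-!
Let `S` be the antidiagonal matrix with entry `(-1) ^ x` in the 0-based row `x`, so that
`S * ψ(A) = [S | A]`. If `det S = 1`, the maximal minor of `ψ(A)` on `K` is the determinant whose
leading columns are `(-1) ^ x • e_x` for `x ∉ I`, in decreasing order of `x`, and whose remaining
columns are the columns of `A` indexed by `J`. Expanding along the first column deletes the row of
the largest such `x`: the sign of the cofactor cancels the factor `(-1) ^ x`, and the rows of the
remaining `x ∉ I` keep their positions. Repeating this leaves the minor of `A` on `I` and `J`.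
The same expansion, with no columns of `A`, gives `det S = 1`.
-/

section Enumeration

variable {k l : ℕ}

theorem strictMono_fin_append {α : Type*} [Preorder α] {f : Fin l → α} {g : Fin k → α}
    (hf : StrictMono f) (hg : StrictMono g) (hfg : ∀ i j, f i < g j) :
    StrictMono (Fin.append f g) := by
  intro a b hab
  induction a using Fin.addCases with
  | left a =>
    induction b using Fin.addCases with
    | left b => simpa using hf ((Fin.strictMono_castAdd k).lt_iff_lt.1 hab)
    | right b => simpa using hfg a b
  | right a =>
    induction b using Fin.addCases with
    | left b =>
      simp only [Fin.lt_def, Fin.val_natAdd, Fin.val_castAdd] at hab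
      omega
    | right b => simpa using hg ((Fin.strictMono_natAdd l).lt_iff_lt.1 hab)

end Enumeration

section Determinant

open Matrix

variable {R : Type*} [CommRing R] {k l n : ℕ}

theorem det_eq_det_submatrix_of_col_zero_eq_single {M : Matrix (Fin (n + 1)) (Fin (n + 1)) R}
    {x : Fin (n + 1)} (hM : M.col 0 = Pi.single x ((-1) ^ (x : ℕ))) :
    M.det = (M.submatrix x.succAbove Fin.succ).det := by
  have hcol (i : Fin (n + 1)) := congrFun hM i
  simp only [col_apply] at hcol
  rw [det_succ_column_zero, Fintype.sum_eq_single x fun i hi => by simp [hcol, hi], hcol,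
    Pi.single_eq_same, ← pow_add, Even.neg_one_pow ⟨_, rfl⟩, one_mul]

theorem det_eq_det_submatrix_of_col_eq_single (h : l + k = n) {M : Matrix (Fin n) (Fin n) R}
    {g : Fin l → Fin n} {f : Fin k → Fin n} (hg : StrictAnti g) (hf : StrictMono f)
    (hfg : ∀ i j, f i ≠ g j)
    (hM : ∀ c, M.col ((Fin.castAdd k c).cast h) = Pi.single (g c) ((-1) ^ (g c : ℕ))) :
    M.det = (M.submatrix f fun j => (Fin.natAdd l j).cast h).det := by
  induction l generalizing n with
  | zero =>
    obtain rfl : k = n := by omega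
    have hrows : f = id := (hf.range_inj strictMono_id).1 <| by
      simpa using (Finite.injective_iff_surjective.1 hf.injective).range_eq
    have hcols : (fun j : Fin k => (Fin.natAdd 0 j).cast h) = id := by ext; simp
    rw [hrows, hcols, submatrix_id_id]
  | succ l ih =>
    obtain ⟨n, rfl⟩ : ∃ n', n = n' + 1 := ⟨l + k, by omega⟩
    have hl : l + k = n := by omega
    choose f' hf' using fun i => Fin.exists_succAbove_eq (hfg i 0)
    have hlt (c : Fin l) : g c.succ < g 0 := hg c.succ_pos
    let g' (c : Fin l) : Fin n := (g c.succ).castPred (Fin.ne_last_of_lt (hlt c))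
    have hg' (c : Fin l) : (g 0).succAbove (g' c) = g c.succ :=
      Fin.succAbove_castPred_of_lt _ _ (hlt c)
    have hleft (c : Fin l) : ((Fin.castAdd k c).cast hl).succ = (Fin.castAdd k c.succ).cast h := by
      ext; simp
    have hright (j : Fin k) : ((Fin.natAdd l j).cast hl).succ = (Fin.natAdd (l + 1) j).cast h := by
      ext
      simp only [Fin.val_succ, Fin.val_cast, Fin.val_natAdd]
      omega
    rw [det_eq_det_submatrix_of_col_zero_eq_single (hM 0), ih hl (g := g') (f := f')]
    · simp only [submatrix_submatrix, Function.comp_def, hf', hright]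
    · exact fun a b hab => hg (Fin.succ_lt_succ_iff.2 hab)
    · exact fun a b hab => (Fin.strictMono_succAbove (g 0)).lt_iff_lt.1 <| by
        simpa only [hf'] using hf hab
    · exact fun i j hij => hfg i j.succ (by rw [← hf', ← hg', hij])
    · intro c
      ext i
      have hcol := congrFun (hM c.succ) ((g 0).succAbove i)
      have hval : (g' c : ℕ) = g c.succ := rfl
      rw [col_apply, ← hleft, ← hval, ← hg', Pi.single_apply] at hcol
      simp only [col_apply, submatrix_apply, hcol, Pi.single_apply, Fin.succAbove_right_inj]

/-- Left multiplication by the antidiagonal matrix with entry `(-1) ^ i` in the 0-based row `i`.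
It turns the second block of `ψ(A)` back into `A`. -/
def signedRev {ι : Type*} (M : Matrix (Fin n) ι R) : Matrix (Fin n) ι R :=
  of fun i j => (-1) ^ (i : ℕ) * M i.rev j

theorem signedRev_apply {ι : Type*} (M : Matrix (Fin n) ι R) (i : Fin n) (j : ι) :
    signedRev M i j = (-1) ^ (i : ℕ) * M i.rev j :=
  rfl

theorem signedRev_submatrix_id {ι κ : Type*} (M : Matrix (Fin n) ι R) (e : κ → ι) :
    signedRev (M.submatrix id e) = (signedRev M).submatrix id e :=
  rfl

theorem signedRev_eq_mul {ι : Type*} (M : Matrix (Fin n) ι R) :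
    signedRev M = signedRev (1 : Matrix (Fin n) (Fin n) R) * M := by
  ext i j
  simp [mul_apply, signedRev_apply, one_apply]

theorem det_signedRev_one : (signedRev (1 : Matrix (Fin n) (Fin n) R)).det = 1 := by
  rw [det_eq_det_submatrix_of_col_eq_single (Nat.add_zero n) (g := Fin.rev) (f := Fin.elim0)
    Fin.rev_strictAnti (fun i => i.elim0) (fun i => i.elim0), det_isEmpty]
  intro c
  ext i
  have hrev : i.rev = c ↔ i = c.rev := Fin.rev_eq_iff
  by_cases hi : i = c.rev <;> simp [signedRev_apply, one_apply, hrev, hi, -Fin.val_rev]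

theorem det_signedRev (M : Matrix (Fin n) (Fin n) R) : (signedRev M).det = M.det := by
  rw [signedRev_eq_mul, det_mul, det_signedRev_one, one_mul]

end Determinant

section Psi

open Matrix

variable {R : Type*} [CommRing R] {k l m n N : ℕ}

/-- Postnikov's map `ψ` for rectangular matrices over a commutative ring: an `m × n` matrix `A` is
sent to the `m × (m + n)` matrix `[1 | A']`, where `A'` is `A` with its rows reversed and
given alternating signs, the last one being `+`. The number of columns is a variable `N`
equal to `m + n`, so that the definition applies verbatim to `2 * n` columns. -/
def psi (h : m + n = N) (A : Matrix (Fin m) (Fin n) R) : Matrix (Fin m) (Fin N) R :=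
  of fun i c =>
    Fin.append (Pi.single i 1) (fun j => (-1) ^ (i.rev : ℕ) * A i.rev j) (c.cast h.symm)

/-- The columns of `psi h A` whose maximal minor is the minor of `A` on rows `I` and columns `J`:
the reversed complement of `I` in the identity block, and `J` in the other block. -/
def psiColumnSet (h : m + n = N) (I : Finset (Fin m)) (J : Finset (Fin n)) : Finset (Fin N) :=
  Iᶜ.image (fun x => (Fin.castAdd n x.rev).cast h) ∪ J.image fun j => (Fin.natAdd m j).cast h

theorem psi_castAdd (h : m + n = N) (A : Matrix (Fin m) (Fin n) R) (i c : Fin m) :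
    psi h A i ((Fin.castAdd n c).cast h) = if c = i then 1 else 0 := by
  simp [psi, Pi.single_apply]

theorem psi_natAdd (h : m + n = N) (A : Matrix (Fin m) (Fin n) R) (i : Fin m) (j : Fin n) :
    psi h A i ((Fin.natAdd m j).cast h) = (-1) ^ (i.rev : ℕ) * A i.rev j := by
  simp [psi]

theorem signedRev_psi_col_castAdd_rev (h : m + n = N) (A : Matrix (Fin m) (Fin n) R) (x : Fin m) :
    (signedRev (psi h A)).col ((Fin.castAdd n x.rev).cast h) = Pi.single x ((-1) ^ (x : ℕ)) := by
  ext i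
  by_cases hi : i = x <;> simp [signedRev_apply, psi_castAdd, hi, eq_comm (a := x)]

theorem signedRev_psi_natAdd (h : m + n = N) (A : Matrix (Fin m) (Fin n) R) (i : Fin m)
    (j : Fin n) : signedRev (psi h A) i ((Fin.natAdd m j).cast h) = A i j := by
  rw [signedRev_apply, psi_natAdd, Fin.rev_rev, ← mul_assoc, ← pow_add, Even.neg_one_pow ⟨_, rfl⟩,
    one_mul]

theorem card_psiColumnSet (h : m + n = N) {I : Finset (Fin m)} {J : Finset (Fin n)}
    (hIJ : I.card = J.card) : (psiColumnSet h I J).card = m := by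
  have hdisj : Disjoint (Iᶜ.image fun x => (Fin.castAdd n x.rev).cast h)
      (J.image fun j => (Fin.natAdd m j).cast h) := by
    simp only [Finset.disjoint_left, Finset.mem_image, Fin.ext_iff, Fin.val_cast, Fin.val_castAdd,
      Fin.val_natAdd]
    rintro _ ⟨x, -, hx⟩ ⟨j, -, hj⟩
    omega
  rw [psiColumnSet, Finset.card_union_of_disjoint hdisj, Finset.card_image_of_injective,
    Finset.card_image_of_injective, ← hIJ, Finset.card_compl_add_card, Fintype.card_fin]
  · exact (Fin.cast_injective h).comp (Fin.natAdd_injective n m)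
  · exact (Fin.cast_injective h).comp ((Fin.castAdd_injective m n).comp Fin.rev_injective)

theorem orderEmbOfFin_psiColumnSet (h : m + n = N) (hl : l + k = m) {I : Finset (Fin m)}
    {J : Finset (Fin n)} (hI : Iᶜ.card = l) (hJ : J.card = k)
    (hK : (psiColumnSet h I J).card = m) :
    (psiColumnSet h I J).orderEmbOfFin hK = fun c : Fin m => Fin.append
      (fun t => (Fin.castAdd n (Iᶜ.orderEmbOfFin hI t.rev).rev).cast h)
      (fun t => (Fin.natAdd m (J.orderEmbOfFin hJ t)).cast h) (c.cast hl.symm) := by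
  refine (Finset.orderEmbOfFin_unique hK (fun c => ?_) ?_).symm
  · rw [psiColumnSet, Finset.mem_union]
    induction c.cast hl.symm using Fin.addCases with
    | left t =>
      rw [Fin.append_left]
      exact .inl (Finset.mem_image_of_mem _ (Finset.orderEmbOfFin_mem _ hI _))
    | right t =>
      rw [Fin.append_right]
      exact .inr (Finset.mem_image_of_mem _ (Finset.orderEmbOfFin_mem _ hJ _))
  · refine (strictMono_fin_append ?_ ?_ fun i j => ?_).comp (Fin.cast_strictMono hl.symm)
    · exact fun a b hab => Fin.strictMono_castAdd n <| Fin.rev_lt_rev.2 <|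
        (Iᶜ.orderEmbOfFin hI).strictMono (Fin.rev_lt_rev.2 hab)
    · exact fun a b hab => Fin.strictMono_natAdd m ((J.orderEmbOfFin hJ).strictMono hab)
    · simp only [Fin.lt_def, Fin.val_cast, Fin.val_castAdd, Fin.val_natAdd]
      omega

theorem minor_eq_psi_maximal_minor_general (h : m + n = N) (A : Matrix (Fin m) (Fin n) R)
    (I : Finset (Fin m)) (J : Finset (Fin n)) (hI : I.card = k) (hJ : J.card = k) :
    ∃ hK : (psiColumnSet h I J).card = m,
      (A.submatrix (fun t => (I.orderIsoOfFin hI t : Fin m))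
          (fun t => (J.orderIsoOfFin hJ t : Fin n))).det =
      ((psi h A).submatrix id
          (fun t => ((psiColumnSet h I J).orderIsoOfFin hK t : Fin N))).det := by
  have hl : Iᶜ.card + k = m := by rw [← hI, Finset.card_compl_add_card, Fintype.card_fin]
  have hK := card_psiColumnSet h (hI.trans hJ.symm)
  refine ⟨hK, ?_⟩
  simp only [Finset.coe_orderIsoOfFin_apply, orderEmbOfFin_psiColumnSet h hl rfl hJ hK]
  rw [← det_signedRev ((psi h A).submatrix _ _), signedRev_submatrix_id,
    det_eq_det_submatrix_of_col_eq_single hl (g := fun t => Iᶜ.orderEmbOfFin rfl t.rev)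
      (f := I.orderEmbOfFin hI)]
  · congr 1
    ext i j
    simp [signedRev_psi_natAdd]
  · exact (Iᶜ.orderEmbOfFin rfl).strictMono.comp_strictAnti Fin.rev_strictAnti
  · exact (I.orderEmbOfFin hI).strictMono
  · intro i c hic
    exact Finset.mem_compl.1 (Iᶜ.orderEmbOfFin_mem rfl c.rev) (hic ▸ I.orderEmbOfFin_mem hI i)
  · intro c
    rw [← signedRev_psi_col_castAdd_rev h A]
    ext i
    simp

end Psi

section Square

variable {n : ℕ}

theorem psiMat_eq_psi (A : Matrix (Fin n) (Fin n) ℝ) : psiMat A = psi (two_mul n).symm A := by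
  ext i c
  obtain ⟨c, rfl⟩ := (Fin.rightInverse_cast (two_mul n).symm).surjective c
  induction c using Fin.addCases with
  | left c => rw [psi_castAdd]; simp [psiMat, Fin.ext_iff, eq_comm]
  | right j =>
    have hrev : (⟨n - 1 - i, by omega⟩ : Fin n) = i.rev := by
      ext
      simp only [Fin.val_rev]
      omega
    rw [psi_natAdd, ← hrev]
    simp [psiMat]

theorem KSet_eq_psiColumnSet (I J : Finset (Fin n)) :
    KSet I J = psiColumnSet (two_mul n).symm I J := by
  have hrev (x : Fin n) : n - 1 - (x : ℕ) = x.rev := by rw [Fin.val_rev]; omega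
  simp only [KSet, psiColumnSet, hrev]
  rfl

end Square

/-- Lemma 3.9 of Postnikov: for `B = ψ(A)`, the minor `Δ_{I,J}(A)` equals the maximal minor
`Δ_{[n],K}(B)` where `K = {n+1-k : k ∉ I} ∪ {n+j : j ∈ J}`. -/
theorem minor_eq_psi_maximal_minor
    {n : ℕ} (A : Matrix (Fin n) (Fin n) ℝ) (k : ℕ) (I J : Finset (Fin n))
    (hI : I.card = k) (hJ : J.card = k) :
    ∃ hK : (KSet I J).card = n,
      (A.submatrix (fun t => (I.orderIsoOfFin hI t : Fin n))
          (fun t => (J.orderIsoOfFin hJ t : Fin n))).det =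
      ((psiMat A).submatrix id
          (fun t => ((KSet I J).orderIsoOfFin hK t : Fin (2 * n)))).det := by
  rw [psiMat_eq_psi, KSet_eq_psiColumnSet]
  exact minor_eq_psi_maximal_minor_general _ A I J hI hJ
end

section
/- Let A be an n × n Dyck matrix regarded as a real matrix and B = ψ(A). Then B has rank n, and every maximal minor of B is nonnegative: for every n-element subset K of {1,…,2n}, the determinant of the n × n submatrix of B on column set K (columns listed in increasing order) is nonnegative. -/
/-! Reversing the rows of `ψ(A)` with alternating signs does not change the maximal minors, and it
turns `ψ(A)` into `(J | A)`, where the columns of `J` are the signed unit vectors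
`(-1)^(n-1) e_{n-1}, …, -e_1, e_0`. In a maximal minor, expanding along the columns taken from `J`,
from left to right, only produces positive signs, and what remains is a minor of `A`. So the maximal
minors of `ψ(A)` are nonnegative as soon as all minors of `A` are. For a Dyck matrix they are: in a
square submatrix, either the first row vanishes beyond its first entry, and one expands along it, or
the first column and a later one both consist of ones. -/

section TotallyNonneg

variable {m n m' n' R : Type*} [Preorder m] [Preorder n] [Preorder m'] [Preorder n']
  [CommRing R] [PartialOrder R]

/-- Total nonnegativity: all minors are nonnegative. Strictly increasing maps `Fin k → m` and
`Fin k → n` encode the choice of `k` rows and `k` columns. -/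
def IsTotallyNonneg (A : Matrix m n R) : Prop :=
  ∀ ⦃k : ℕ⦄ ⦃r : Fin k → m⦄ ⦃c : Fin k → n⦄, StrictMono r → StrictMono c →
    0 ≤ (A.submatrix r c).det

theorem IsTotallyNonneg.submatrix {A : Matrix m n R} (hA : IsTotallyNonneg A)
    {r : m' → m} {c : n' → n} (hr : StrictMono r) (hc : StrictMono c) :
    IsTotallyNonneg (A.submatrix r c) :=
  fun _ _ _ hr' hc' => hA (hr.comp hr') (hc.comp hc')

end TotallyNonneg

section ZeroOneStaircase

variable {m n m' n' R : Type*} [Preorder m] [Preorder n] [Preorder m'] [Preorder n']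

/-- A 0/1 matrix whose zeros are closed under moving up and to the right, i.e. form a Young diagram
anchored at the upper-right corner. Unlike for a Dyck matrix, the zeros may cross the diagonal, so
that the notion passes to submatrices. -/
structure IsZeroOneStaircase [Zero R] [One R] (A : Matrix m n R) : Prop where
  zero_or_one : ∀ i j, A i j = 0 ∨ A i j = 1
  zero_of_le : ∀ ⦃i j i' j'⦄, A i j = 0 → i' ≤ i → j ≤ j' → A i' j' = 0

theorem IsZeroOneStaircase.submatrix [Zero R] [One R] {A : Matrix m n R}
    (hA : IsZeroOneStaircase A) {r : m' → m} {c : n' → n} (hr : Monotone r) (hc : Monotone c) :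
    IsZeroOneStaircase (A.submatrix r c) where
  zero_or_one _ _ := hA.zero_or_one _ _
  zero_of_le _ _ _ _ h hi hj := hA.zero_of_le h (hr hi) (hc hj)

theorem IsZeroOneStaircase.eq_one_of_le [Zero R] [One R] {A : Matrix m n R}
    (hA : IsZeroOneStaircase A) {i i' : m} {j j' : n} (h : A i j ≠ 0) (hi : i ≤ i') (hj : j' ≤ j) :
    A i' j' = 1 :=
  (hA.zero_or_one i' j').resolve_left fun h₀ => h (hA.zero_of_le h₀ hi hj)

variable [CommRing R] [PartialOrder R] [IsOrderedRing R]

theorem IsZeroOneStaircase.det_nonneg {k : ℕ} {A : Matrix (Fin k) (Fin k) R}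
    (hA : IsZeroOneStaircase A) : 0 ≤ A.det := by
  induction k with
  | zero => simp
  | succ k ih =>
    by_cases hrow : ∀ j : Fin k, A 0 j.succ = 0
    · have hexpand : A.det = A 0 0 * (A.submatrix Fin.succ Fin.succ).det := by
        simp [Matrix.det_succ_row_zero, Fin.sum_univ_succ, hrow]
      have hentry : 0 ≤ A 0 0 := by rcases hA.zero_or_one 0 0 with h | h <;> simp [h]
      have hsucc := (Fin.strictMono_succ (n := k)).monotone
      exact hexpand ▸ mul_nonneg hentry (ih (hA.submatrix hsucc hsucc))
    · obtain ⟨j, hj⟩ := not_forall.mp hrow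
      have hcols (i : Fin (k + 1)) : A i 0 = A i j.succ := by
        rw [hA.eq_one_of_le hj i.zero_le j.succ.zero_le, hA.eq_one_of_le hj i.zero_le le_rfl]
      rw [Matrix.det_zero_of_column_eq j.succ_ne_zero.symm hcols]

theorem IsZeroOneStaircase.isTotallyNonneg {A : Matrix m n R} (hA : IsZeroOneStaircase A) :
    IsTotallyNonneg A :=
  fun _ _ _ hr hc => (hA.submatrix hr.monotone hc.monotone).det_nonneg

theorem IsDyckMatrix.isZeroOneStaircase {n : ℕ} {A : Matrix (Fin n) (Fin n) ℝ}
    (hA : IsDyckMatrix A) : IsZeroOneStaircase A :=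
  ⟨hA.1, hA.2.2⟩

end ZeroOneStaircase

section SignedUnitColumns

variable {R : Type*} [CommRing R] [PartialOrder R] [IsOrderedRing R]

/- The pivot `(-1)^(p 0)` in column `0` cancels its cofactor sign. As the other pivots lie in rows
above `p 0`, deleting that row leaves their positions, hence their signs, unchanged. -/
theorem det_nonneg_of_signed_unit_columns {n : ℕ} {N : Matrix (Fin n) (Fin n) R}
    {S : Set (Fin n)} {p : Fin n → ℕ} (hS : IsLowerSet S) (hp : StrictAntiOn p S)
    (hunit : ∀ i, ∀ t ∈ S, N i t = if (i : ℕ) = p t then (-1) ^ (i : ℕ) else 0)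
    (hN : IsTotallyNonneg (N.submatrix id ((↑) : ↥Sᶜ → Fin n))) : 0 ≤ N.det := by
  induction n with
  | zero => simp
  | succ n ih =>
    by_cases h₀ : 0 ∈ S
    · rw [Matrix.det_succ_column_zero]
      refine Finset.sum_nonneg fun i _ => ?_
      by_cases hi : (i : ℕ) = p 0
      · have hsign : (-1 : R) ^ (i : ℕ) * N i 0 = 1 := by
          rw [hunit i 0 h₀, if_pos hi, ← mul_pow, neg_one_mul, neg_neg, one_pow]
        rw [hsign, one_mul]
        have hsucc := Fin.strictMono_succ (n := n)
        refine ih (S := Fin.succ ⁻¹' S) (p := p ∘ Fin.succ) (hS.preimage hsucc.monotone)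
          (hp.comp_strictMonoOn (hsucc.strictMonoOn _) fun _ ht => ht) (fun a t ht => ?_)
          (hN.submatrix i.strictMono_succAbove
            (c := fun t : ↥(Fin.succ ⁻¹' S)ᶜ => (⟨t.1.succ, t.2⟩ : ↥Sᶜ)) fun _ _ h => hsucc h)
        have habove : p t.succ < i := hi ▸ hp h₀ ht t.succ_pos
        have hrow : (i.succAbove a : ℕ) = p t.succ ↔ (a : ℕ) = p t.succ := by
          grind [Fin.succAbove]
        rw [Matrix.submatrix_apply, hunit _ _ ht]
        grind
      · simp [hunit i 0 h₀, hi]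
    · have hempty : ∀ t, t ∉ S := fun t ht => h₀ (hS t.zero_le ht)
      exact hN (r := id) (c := fun t => ⟨t, hempty t⟩) strictMono_id fun _ _ h => h

end SignedUnitColumns

section SignedRowReversal

/-- The rows in reverse order with alternating signs, the new top row getting the sign `+`. This
undoes the row reversal and the signs in the right half of `psiMat`. -/
def signedRowReversal {n : ℕ} {ι R : Type*} [Ring R] (M : Matrix (Fin n) ι R) :
    Matrix (Fin n) ι R :=
  Matrix.of fun i j => (-1) ^ (i : ℕ) * M i.rev j

theorem sign_revPerm (n : ℕ) :
    Equiv.Perm.sign (Fin.revPerm : Equiv.Perm (Fin n)) = ∏ i : Fin n, (-1) ^ (i : ℕ) := by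
  rw [Equiv.Perm.sign_eq_prod_prod_Iio]
  refine Finset.prod_congr rfl fun j _ => ?_
  rw [Finset.prod_congr rfl fun i hi => if_neg (by simpa using (Finset.mem_Iio.mp hi).le)]
  simp

theorem det_signedRowReversal {n : ℕ} {R : Type*} [CommRing R] (M : Matrix (Fin n) (Fin n) R) :
    (signedRowReversal M).det = M.det := by
  have hdet : (signedRowReversal M).det =
      (∏ i : Fin n, (-1) ^ (i : ℕ)) * (M.submatrix Fin.revPerm id).det :=
    Matrix.det_mul_column _ _
  rw [hdet, Matrix.det_permute, sign_revPerm, ← mul_assoc]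
  push_cast
  simp [← Finset.prod_mul_distrib, ← mul_pow]

end SignedRowReversal

section PsiMat

variable {n : ℕ} (A : Matrix (Fin n) (Fin n) ℝ)

theorem psiMat_submatrix_castLE :
    (psiMat A).submatrix id (Fin.castLE (Nat.le_mul_of_pos_left n two_pos)) = 1 := by
  ext i j
  simp [psiMat, Matrix.one_apply, Fin.ext_iff]

theorem rank_psiMat : (psiMat A).rank = n := by
  refine le_antisymm (by simpa using (psiMat A).rank_le_height) ?_
  have h := (psiMat A).rank_submatrix_le id (Fin.castLE (Nat.le_mul_of_pos_left n two_pos))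
  simpa [psiMat_submatrix_castLE] using h

theorem signedRowReversal_psiMat_of_lt (i : Fin n) {c : Fin (2 * n)} (hc : (c : ℕ) < n) :
    signedRowReversal (psiMat A) i c =
      if (i : ℕ) = n - 1 - c then (-1) ^ (i : ℕ) else 0 := by
  have hrev : (i.rev : ℕ) = c ↔ (i : ℕ) = n - 1 - c := by grind
  simp only [signedRowReversal, psiMat, Matrix.of_apply, dif_pos hc, hrev, mul_ite, mul_one,
    mul_zero]

theorem signedRowReversal_psiMat_of_le (i : Fin n) {c : Fin (2 * n)} (hc : n ≤ (c : ℕ)) :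
    signedRowReversal (psiMat A) i c = A i ⟨c - n, by omega⟩ := by
  have hrev : n - 1 - (i.rev : ℕ) = i := by grind
  simp only [signedRowReversal, psiMat, Matrix.of_apply, dif_neg hc.not_gt, hrev]
  rw [← mul_assoc, ← mul_pow, neg_one_mul, neg_neg, one_pow, one_mul]

variable {A}

theorem det_psiMat_submatrix_nonneg (hA : IsTotallyNonneg A) {f : Fin n → Fin (2 * n)}
    (hf : StrictMono f) : 0 ≤ ((psiMat A).submatrix id f).det := by
  rw [← det_signedRowReversal]
  let S : Set (Fin n) := {t | (f t : ℕ) < n}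
  refine det_nonneg_of_signed_unit_columns (S := S) (p := fun t => n - 1 - f t)
    (fun t t' ht' ht => ?lower) (fun t _ t' ht' h => ?anti)
    (fun i t ht => signedRowReversal_psiMat_of_lt A i ht) ?right
  case lower => exact (Fin.le_def.mp (hf.monotone ht')).trans_lt ht
  case anti =>
    have : (f t : ℕ) < f t' := hf h
    have : (f t' : ℕ) < n := ht'
    change n - 1 - f t' < n - 1 - f t
    omega
  case right =>
    have hle (t : ↥Sᶜ) : n ≤ (f t : ℕ) := not_lt.mp t.2
    have hmono : StrictMono fun t : ↥Sᶜ => (⟨f t - n, by omega⟩ : Fin n) := fun t t' h =>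
      Nat.sub_lt_sub_right (hle t) (hf h)
    convert hA.submatrix strictMono_id hmono using 1
    ext i t
    exact signedRowReversal_psiMat_of_le A i (hle t)

theorem psi_dyckMatrix_rank_and_nonneg_maximal_minors_general (hA : IsTotallyNonneg A) :
    (psiMat A).rank = n ∧
    ∀ (K : Finset (Fin (2 * n))) (hK : K.card = n),
      0 ≤ ((psiMat A).submatrix id
          (fun t => (K.orderIsoOfFin hK t : Fin (2 * n)))).det :=
  ⟨rank_psiMat A, fun K hK => det_psiMat_submatrix_nonneg hA (K.orderIsoOfFin hK).strictMono⟩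

end PsiMat

/-- For a Dyck matrix `A`, the matrix `B = ψ(A)` has full rank `n` and all of its maximal
minors are nonnegative. -/
theorem psi_dyckMatrix_rank_and_nonneg_maximal_minors
    {n : ℕ} (A : Matrix (Fin n) (Fin n) ℝ) (hA : IsDyckMatrix A) :
    (psiMat A).rank = n ∧
    ∀ (K : Finset (Fin (2 * n))) (hK : K.card = n),
      0 ≤ ((psiMat A).submatrix id
          (fun t => (K.orderIsoOfFin hK t : Fin (2 * n)))).det :=
  psi_dyckMatrix_rank_and_nonneg_maximal_minors_general hA.isZeroOneStaircase.isTotallyNonneg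
end

section
/- Let A be an n × n Dyck matrix and B = ψ(A) with columns B_1,…,B_{2n}, column indices taken modulo 2n. Then for every i ∈ {1,…,2n}, among the indices j ∈ {1,…,2n} such that B_i lies in the real linear span of the columns B_{i+1}, B_{i+2}, …, B_j (the indices i+1,…,j being consecutive modulo 2n) there is a minimal one with respect to the shifted linear i-order, and this minimal index j equals π_A(i). In particular, in the last clause of the definition of π_A the element j ∈ J with ω(j) = i−1 is unique when it exists. -/
/-- The `j`-th column (1-based, `1 ≤ j ≤ 2n`) of `B = ψ(A)`, as a vector. -/
noncomputable def colB {n : ℕ} (A : Matrix (Fin n) (Fin n) ℝ) (j : ℕ) : Fin n → ℝ :=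
  fun r => if h : j - 1 < 2 * n then psiMat A r ⟨j - 1, h⟩ else 0

/-- The set of principal indices `J = {j ∈ {n+1,…,2n} : B_j ≠ B_{j-1}}` (1-based). -/
def JSet {n : ℕ} (A : Matrix (Fin n) (Fin n) ℝ) : Set ℕ :=
  {j | n + 1 ≤ j ∧ j ≤ 2 * n ∧ colB A j ≠ colB A (j - 1)}

open Classical in
/-- The weight map `ω` (1-based): `ω(j) = j` for `j ≤ n`, and `ω(j)` is the number of nonzero
entries of the column `B_j` for `n+1 ≤ j ≤ 2n`. -/
noncomputable def omegaB {n : ℕ} (A : Matrix (Fin n) (Fin n) ℝ) (j : ℕ) : ℕ :=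
  if j ≤ n then j
  else (Finset.univ.filter fun r : Fin n => colB A j r ≠ 0).card

open Classical in
/-- The map `π_A` on `{1,…,2n}` (1-based). -/
noncomputable def piA {n : ℕ} (A : Matrix (Fin n) (Fin n) ℝ) : ℕ → ℕ := fun i =>
  if i = 1 then n + 1
  else if i ≤ n then
    (if h : ∃ j, j ∈ JSet A ∧ omegaB A j = i - 1 then h.choose else i - 1)
  else if i < 2 * n then (if i + 1 ∈ JSet A then omegaB A i else i + 1)
  else omegaB A (2 * n)

/-- The position of `t ∈ {1,…,m}` in the shifted linear `i`-order on `{1,…,m}` (1-based):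
`i` has position `0`, `i+1` position `1`, … cyclically. -/
def shiftPos (m i t : ℕ) : ℕ := (t + m - i) % m

/-- `B_i` lies in the span of the columns `B_{i+1}, …, B_j`, the indices `i+1,…,j` being taken
consecutively modulo `2n` (in `{1,…,2n}`, 1-based). -/
noncomputable def SpannedBySegment {n : ℕ} (A : Matrix (Fin n) (Fin n) ℝ) (i j : ℕ) : Prop :=
  colB A i ∈ Submodule.span ℝ
    {v : Fin n → ℝ | ∃ t, 1 ≤ t ∧ t ≤ 2 * n ∧
      1 ≤ shiftPos (2 * n) i t ∧ shiftPos (2 * n) i t ≤ shiftPos (2 * n) i j ∧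
      v = colB A t}

/-!
The first `n` columns of `B = ψ(A)` are the standard basis vectors, and for `n < t ≤ 2n` the column
`B_t` is determined by its weight `w = ω(t)`: its first `w` entries are the alternating signs
`(-1)^(n-1-r)` and the others vanish. Weights decrease from `ω(n+1) = n`, and `J` (apart possibly
from `n + 1`) is the set of indices at which they drop strictly.

Each value `p = π_A(i)` is then certified by a relation expressing `B_i` through `B_{i+1}, …, B_p`
and by a linear functional that does not vanish at `B_i` but kills `B_{i+1}, …, B_{p-1}`.
When `i > n` and `π_A(i) = ω(i)`, the functional reads the last nonzero entry of `B_i`. For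
`1 < i ≤ n` it is the sum of the entries in rows `i - 1` and `i`: the alternating signs cancel
unless `ω(t) = i - 1`.
-/

section CoordinateSpan

variable {ι : Type*} [Finite ι] [DecidableEq ι]

theorem mem_of_forall_single_mem {R : Type*} [Semiring R] {W : Submodule R (ι → R)} {v : ι → R}
    (h : ∀ r, v r ≠ 0 → Pi.single r 1 ∈ W) : v ∈ W := by
  have := Fintype.ofFinite ι
  rw [pi_eq_sum_univ' v]
  refine W.sum_mem fun r _ => ?_
  by_cases hr : v r = 0
  · simp [hr]
  · convert W.smul_mem (v r) (h r hr) using 2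

theorem single_mem_of_mem {K : Type*} [DivisionRing K] {W : Submodule K (ι → K)} {v : ι → K}
    {x : ι} (hv : v ∈ W) (hx : v x ≠ 0) (h : ∀ r, r ≠ x → v r ≠ 0 → Pi.single r 1 ∈ W) :
    Pi.single x 1 ∈ W := by
  have hrest : v - v x • Pi.single x 1 ∈ W := by
    refine mem_of_forall_single_mem fun r hr => ?_
    have hrx : r ≠ x := by
      rintro rfl
      simp at hr
    exact h r hrx (by simpa [hrx] using hr)
  rwa [W.sub_mem_iff_right hv, W.smul_mem_iff hx] at hrest

end CoordinateSpan

theorem mem_iff_lt_card_of_isLowerSet {n : ℕ} {S : Finset (Fin n)}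
    (hS : IsLowerSet (S : Set (Fin n))) (r : Fin n) : r ∈ S ↔ (r : ℕ) < S.card := by
  constructor
  · intro hr
    have hsub : Finset.Iic r ⊆ S := fun a ha => hS (Finset.mem_Iic.1 ha) hr
    simpa [Fin.card_Iic, Nat.succ_le_iff] using Finset.card_le_card hsub
  · contrapose!
    intro hr
    have hsub : S ⊆ Finset.Iio r := fun a ha =>
      Finset.mem_Iio.2 (not_le.1 fun hra => hr (hS hra ha))
    simpa [Fin.card_Iio] using Finset.card_le_card hsub

theorem shiftPos_of_le {m i t : ℕ} (hit : i ≤ t) (hti : t < i + m) : shiftPos m i t = t - i := by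
  rw [shiftPos, Nat.sub_add_comm hit, Nat.add_mod_right, Nat.mod_eq_of_lt (by omega)]

theorem shiftPos_of_lt {m i t : ℕ} (hti : t < i) : shiftPos m i t = t + m - i := by
  rcases m.eq_zero_or_pos with rfl | hm
  · exact Nat.mod_zero _
  · exact Nat.mod_eq_of_lt (by omega)

section

variable {n : ℕ} {A : Matrix (Fin n) (Fin n) ℝ} {i j p s t : ℕ}

/-! ### Minimal spanning indices -/

/-- The index `p` is minimal, in the shifted `i`-order, among the `j` for which `B_i` lies in the
span of `B_{i+1}, …, B_j`. -/
def IsMinSpanIndex (A : Matrix (Fin n) (Fin n) ℝ) (i p : ℕ) : Prop :=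
  SpannedBySegment A i p ∧
    ∀ j, 1 ≤ j → j ≤ 2 * n → SpannedBySegment A i j →
      shiftPos (2 * n) i p ≤ shiftPos (2 * n) i j

theorem SpannedBySegment.shiftPos_le (hj : SpannedBySegment A i j) (f : (Fin n → ℝ) →ₗ[ℝ] ℝ)
    (hfi : f (colB A i) ≠ 0)
    (hf : ∀ t, 1 ≤ t → t ≤ 2 * n → 1 ≤ shiftPos (2 * n) i t →
      shiftPos (2 * n) i t < shiftPos (2 * n) i p → f (colB A t) = 0) :
    shiftPos (2 * n) i p ≤ shiftPos (2 * n) i j := by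
  by_contra! hlt
  refine hfi ((Submodule.span_le (p := LinearMap.ker f)).2 ?_ hj)
  rintro _ ⟨t, h1, h2, h3, h4, rfl⟩
  exact hf t h1 h2 h3 (h4.trans_lt hlt)

theorem isMinSpanIndex_of_lt (hi : 1 ≤ i) (hip : i < p) (hp : p ≤ 2 * n)
    (hspan : colB A i ∈ Submodule.span ℝ (colB A '' Set.Ioc i p))
    (f : (Fin n → ℝ) →ₗ[ℝ] ℝ) (hfi : f (colB A i) ≠ 0)
    (hf : ∀ t ∈ Set.Ioo i p, f (colB A t) = 0) : IsMinSpanIndex A i p := by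
  have hpos : shiftPos (2 * n) i p = p - i := shiftPos_of_le hip.le (by omega)
  constructor
  · refine Submodule.span_mono ?_ hspan
    rintro _ ⟨t, ⟨hit, htp⟩, rfl⟩
    have ht : shiftPos (2 * n) i t = t - i := shiftPos_of_le hit.le (by omega)
    exact ⟨t, by omega, by omega, by omega, by omega, rfl⟩
  · refine fun j _ _ hj => hj.shiftPos_le f hfi fun t h1 h2 h3 h4 => hf t ?_
    rcases le_or_gt i t with hit | hti
    · rw [shiftPos_of_le hit (by omega)] at h3 h4
      exact ⟨by omega, by omega⟩
    · rw [shiftPos_of_lt hti] at h4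
      omega

theorem isMinSpanIndex_of_gt (hpi : p < i) (hi : i ≤ 2 * n)
    (hspan : colB A i ∈ Submodule.span ℝ (colB A '' (Set.Ioc i (2 * n) ∪ Set.Icc 1 p)))
    (f : (Fin n → ℝ) →ₗ[ℝ] ℝ) (hfi : f (colB A i) ≠ 0)
    (hf : ∀ t ∈ Set.Ioc i (2 * n) ∪ Set.Ico 1 p, f (colB A t) = 0) : IsMinSpanIndex A i p := by
  have hpos : shiftPos (2 * n) i p = p + 2 * n - i := shiftPos_of_lt hpi
  constructor
  · refine Submodule.span_mono ?_ hspan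
    rintro _ ⟨t, ⟨hit, htn⟩ | ⟨h1t, htp⟩, rfl⟩
    · have ht : shiftPos (2 * n) i t = t - i := shiftPos_of_le hit.le (by omega)
      exact ⟨t, by omega, by omega, by omega, by omega, rfl⟩
    · have ht : shiftPos (2 * n) i t = t + 2 * n - i := shiftPos_of_lt (by omega)
      exact ⟨t, by omega, by omega, by omega, by omega, rfl⟩
  · refine fun j _ _ hj => hj.shiftPos_le f hfi fun t h1 h2 h3 h4 => hf t ?_
    rcases le_or_gt i t with hit | hti
    · rw [shiftPos_of_le hit (by omega)] at h3
      exact .inl ⟨by omega, h2⟩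
    · rw [shiftPos_of_lt hti] at h4
      exact .inr ⟨h1, by omega⟩

/-! ### Columns and weights -/

theorem colB_apply_of_le (h1 : 1 ≤ t) (ht : t ≤ n) (r : Fin n) :
    colB A t r = if (r : ℕ) + 1 = t then 1 else 0 := by
  rw [colB, dif_pos (by omega), psiMat, Matrix.of_apply, dif_pos (by simp only; omega)]
  exact if_congr (by simp only; omega) rfl rfl

theorem colB_add_one (r : Fin n) : colB A (r + 1) = Pi.single r 1 := by
  ext s
  simp [colB_apply_of_le (Nat.le_add_left 1 r) r.isLt, Pi.single_apply, Fin.ext_iff]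

theorem colB_add_add_one_apply (k r : Fin n) :
    colB A (n + k + 1) r = (-1) ^ (n - 1 - (r : ℕ)) * A r.rev k := by
  rw [colB, dif_pos (by omega), psiMat, Matrix.of_apply, dif_neg (by simp only; omega)]
  congr 2 <;> ext <;> simp only [Fin.val_rev] <;> omega

theorem exists_fin_eq_add_add_one (ht : t ∈ Set.Ioc n (2 * n)) : ∃ k : Fin n, t = n + k + 1 := by
  obtain ⟨h1, h2⟩ := ht
  exact ⟨⟨t - n - 1, by omega⟩, by simp only; omega⟩

open Classical in
theorem omegaB_of_gt (ht : n < t) :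
    omegaB A t = (Finset.univ.filter fun r => colB A t r ≠ 0).card := by
  rw [omegaB, if_neg (by omega)]

theorem omegaB_le : omegaB A t ≤ n := by
  rw [omegaB]
  split_ifs with ht
  · exact ht
  · exact (Finset.card_le_univ _).trans_eq (Fintype.card_fin n)

namespace IsDyckMatrix

theorem colB_apply_ne_zero_of_le (hA : IsDyckMatrix A) (hs : n < s) (hst : s ≤ t) (ht : t ≤ 2 * n)
    {q r : Fin n} (hqr : q ≤ r) (h : colB A t r ≠ 0) : colB A s q ≠ 0 := by
  obtain ⟨k, rfl⟩ := exists_fin_eq_add_add_one ⟨hs, hst.trans ht⟩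
  obtain ⟨l, rfl⟩ := exists_fin_eq_add_add_one ⟨hs.trans_le hst, ht⟩
  simp only [colB_add_add_one_apply, ne_eq, mul_eq_zero, pow_eq_zero_iff', neg_eq_zero,
    one_ne_zero, false_and, false_or] at h ⊢
  exact fun h0 => h (hA.2.2 _ _ _ _ h0 (Fin.rev_le_rev.2 hqr) (by omega))

theorem colB_apply_ne_zero_iff (hA : IsDyckMatrix A) (ht : t ∈ Set.Ioc n (2 * n)) (r : Fin n) :
    colB A t r ≠ 0 ↔ (r : ℕ) < omegaB A t := by
  classical
  rw [omegaB_of_gt ht.1, ← mem_iff_lt_card_of_isLowerSet]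
  · simp
  · intro a b hba ha
    simp only [Finset.coe_filter, Finset.mem_univ, true_and, Set.mem_ofPred_eq] at ha ⊢
    exact hA.colB_apply_ne_zero_of_le ht.1 le_rfl ht.2 hba ha

theorem colB_apply_of_mem_Ioc (hA : IsDyckMatrix A) (ht : t ∈ Set.Ioc n (2 * n)) (r : Fin n) :
    colB A t r = if (r : ℕ) < omegaB A t then (-1) ^ (n - 1 - (r : ℕ)) else 0 := by
  have hne := hA.colB_apply_ne_zero_iff ht r
  split_ifs with hr
  · rw [← hne] at hr
    obtain ⟨k, rfl⟩ := exists_fin_eq_add_add_one ht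
    rw [colB_add_add_one_apply] at hr ⊢
    rw [(hA.1 r.rev k).resolve_left (right_ne_zero_of_mul hr), mul_one]
  · exact not_not.1 (mt hne.1 hr)

theorem omegaB_antitoneOn (hA : IsDyckMatrix A) : AntitoneOn (omegaB A) (Set.Ioc n (2 * n)) := by
  classical
  intro s hs t ht hst
  rw [omegaB_of_gt hs.1, omegaB_of_gt ht.1]
  exact Finset.card_le_card <| Finset.monotone_filter_right _ fun r _ hr =>
    hA.colB_apply_ne_zero_of_le hs.1 hst ht.2 le_rfl hr

-- The diagonal entries of `A` force `B_t` to be nonzero in row `2n + 1 - t`.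
theorem two_mul_lt_add_omegaB (hA : IsDyckMatrix A) (ht : t ∈ Set.Ioc n (2 * n)) :
    2 * n < t + omegaB A t := by
  obtain ⟨k, rfl⟩ := exists_fin_eq_add_add_one ht
  have hne : colB A (n + k + 1) k.rev ≠ 0 := by
    simp [colB_add_add_one_apply, hA.2.1 k k le_rfl]
  have hlt := (hA.colB_apply_ne_zero_iff ht _).1 hne
  rw [Fin.val_rev] at hlt
  omega

theorem omegaB_pos (hA : IsDyckMatrix A) (ht : t ∈ Set.Ioc n (2 * n)) : 0 < omegaB A t := by
  have := hA.two_mul_lt_add_omegaB ht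
  have := ht.2
  omega

theorem omegaB_add_one_self (hA : IsDyckMatrix A) : omegaB A (n + 1) = n := by
  refine le_antisymm omegaB_le ?_
  rcases n.eq_zero_or_pos with rfl | hn
  · exact Nat.zero_le _
  · have := hA.two_mul_lt_add_omegaB (t := n + 1) ⟨by omega, by omega⟩
    omega

theorem colB_sub_colB_apply_ne_zero_iff (hA : IsDyckMatrix A) (hs : s ∈ Set.Ioc n (2 * n))
    (ht : t ∈ Set.Ioc n (2 * n)) (hst : s ≤ t) (r : Fin n) :
    (colB A s - colB A t) r ≠ 0 ↔ (r : ℕ) ∈ Set.Ico (omegaB A t) (omegaB A s) := by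
  have hle := hA.omegaB_antitoneOn hs ht hst
  rw [Pi.sub_apply, hA.colB_apply_of_mem_Ioc hs, hA.colB_apply_of_mem_Ioc ht, Set.mem_Ico]
  split_ifs with h1 h2
  · simp [h2]
  · simpa using ⟨not_lt.1 h2, h1⟩
  · omega
  · simp [h1]

theorem omegaB_eq_iff (hA : IsDyckMatrix A) (hs : s ∈ Set.Ioc n (2 * n))
    (ht : t ∈ Set.Ioc n (2 * n)) : omegaB A s = omegaB A t ↔ colB A s = colB A t := by
  classical
  constructor <;> intro h
  · ext r
    rw [hA.colB_apply_of_mem_Ioc hs, hA.colB_apply_of_mem_Ioc ht, h]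
  · rw [omegaB_of_gt hs.1, omegaB_of_gt ht.1, h]

theorem add_one_mem_JSet_iff (hA : IsDyckMatrix A) (ht : n < t) (ht' : t < 2 * n) :
    t + 1 ∈ JSet A ↔ omegaB A (t + 1) < omegaB A t := by
  have hmem : t ∈ Set.Ioc n (2 * n) := ⟨ht, ht'.le⟩
  have hmem' : t + 1 ∈ Set.Ioc n (2 * n) := ⟨by omega, ht'⟩
  rw [(hA.omegaB_antitoneOn hmem hmem' t.le_succ).lt_iff_ne, ne_eq, hA.omegaB_eq_iff hmem' hmem]
  exact ⟨fun h => h.2.2, fun h => ⟨by omega, ht', h⟩⟩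

theorem exists_eq_add_one_of_mem_JSet (hA : IsDyckMatrix A) (hj : j ∈ JSet A)
    (hlt : omegaB A j < n) :
    ∃ k ∈ Set.Ioc n (2 * n), j = k + 1 ∧ omegaB A j < omegaB A k := by
  have hnj := hj.1
  have hj2 := hj.2.1
  have hne : j ≠ n + 1 := by
    rintro rfl
    exact hlt.ne hA.omegaB_add_one_self
  obtain ⟨k, rfl⟩ : ∃ k, j = k + 1 := ⟨j - 1, by omega⟩
  exact ⟨k, ⟨by omega, by omega⟩, rfl, (hA.add_one_mem_JSet_iff (by omega) hj2).1 hj⟩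

theorem omegaB_strictAntiOn_JSet (hA : IsDyckMatrix A) : StrictAntiOn (omegaB A) (JSet A) := by
  rintro s ⟨hns, hs, -⟩ (_ | t) ht hst
  · omega
  have ht2 : t + 1 ≤ 2 * n := ht.2.1
  calc omegaB A (t + 1) < omegaB A t := (hA.add_one_mem_JSet_iff (by omega) (by omega)).1 ht
    _ ≤ omegaB A s := hA.omegaB_antitoneOn ⟨hns, hs⟩ ⟨by omega, by omega⟩ (by omega)

theorem exists_mem_JSet_omegaB_eq (hA : IsDyckMatrix A) (ht : t ∈ Set.Ioc n (2 * n))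
    (hlt : omegaB A t < n) : ∃ j ∈ JSet A, omegaB A j = omegaB A t := by
  obtain ⟨hnt, htn⟩ := ht
  induction t, hnt using Nat.le_induction with
  | base => exact absurd hA.omegaB_add_one_self hlt.ne
  | succ t hnt ih =>
    by_cases hJ : t + 1 ∈ JSet A
    · exact ⟨t + 1, hJ, rfl⟩
    · have heq : omegaB A t = omegaB A (t + 1) :=
        le_antisymm (not_lt.1 (mt (hA.add_one_mem_JSet_iff hnt htn).2 hJ))
          (hA.omegaB_antitoneOn ⟨hnt, by omega⟩ ⟨by omega, htn⟩ t.le_succ)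
      rw [← heq] at hlt ⊢
      exact ih hlt (by omega)

end IsDyckMatrix

/-! ### The values of `π_A` -/

theorem colB_mem_span {S : Set ℕ} (ht : t ∈ S) :
    colB A t ∈ Submodule.span ℝ (colB A '' S) :=
  Submodule.subset_span (Set.mem_image_of_mem _ ht)

theorem single_mem_span_colB {S : Set ℕ} {r : Fin n} (hr : (r : ℕ) + 1 ∈ S) :
    Pi.single r 1 ∈ Submodule.span ℝ (colB A '' S) :=
  colB_add_one (A := A) r ▸ colB_mem_span hr

/-- The functional `v ↦ v_x + v_y`. With `x` and `y` adjacent rows it is the certificate of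
minimality of `π_A(i)` for `1 < i ≤ n`. -/
def rowPairSum (x y : Fin n) : (Fin n → ℝ) →ₗ[ℝ] ℝ :=
  (LinearMap.proj x : (Fin n → ℝ) →ₗ[ℝ] ℝ) + LinearMap.proj y

theorem rowPairSum_apply (x y : Fin n) (v : Fin n → ℝ) : rowPairSum x y v = v x + v y :=
  rfl

theorem rowPairSum_colB_add_one_ne_zero {x y : Fin n} (hyx : y ≠ x) :
    rowPairSum x y (colB A (x + 1)) ≠ 0 := by
  simp [rowPairSum_apply, colB_add_one, hyx]

theorem rowPairSum_colB_eq_zero_of_le {x y : Fin n} (h1 : 1 ≤ t) (ht : t ≤ n)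
    (hx : (x : ℕ) + 1 ≠ t) (hy : (y : ℕ) + 1 ≠ t) : rowPairSum x y (colB A t) = 0 := by
  rw [rowPairSum_apply, colB_apply_of_le h1 ht, colB_apply_of_le h1 ht, if_neg hx, if_neg hy,
    add_zero]

namespace IsDyckMatrix

theorem rowPairSum_colB_eq_zero (hA : IsDyckMatrix A) {x y : Fin n} (hyx : (y : ℕ) + 1 = x)
    (ht : t ∈ Set.Ioc n (2 * n)) (hne : omegaB A t ≠ x) : rowPairSum x y (colB A t) = 0 := by
  rw [rowPairSum_apply, hA.colB_apply_of_mem_Ioc ht, hA.colB_apply_of_mem_Ioc ht]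
  by_cases hx : (x : ℕ) < omegaB A t
  · rw [if_pos hx, if_pos (by omega), show n - 1 - (y : ℕ) = n - 1 - (x : ℕ) + 1 by omega, pow_succ]
    ring
  · rw [if_neg hx, if_neg (by omega), add_zero]

theorem isMinSpanIndex_one (hA : IsDyckMatrix A) (hn : 0 < n) : IsMinSpanIndex A 1 (n + 1) := by
  have hcol : colB A 1 = Pi.single ⟨0, hn⟩ 1 := colB_add_one ⟨0, hn⟩
  refine isMinSpanIndex_of_lt le_rfl (by omega) (by omega) ?_ (LinearMap.proj ⟨0, hn⟩)
    (by simp [hcol]) ?_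
  · rw [hcol]
    refine single_mem_of_mem (colB_mem_span (t := n + 1) ⟨by omega, le_rfl⟩) ?_
      fun r hr _ => single_mem_span_colB ?_
    · rwa [hA.colB_apply_ne_zero_iff ⟨by omega, by omega⟩, hA.omegaB_add_one_self]
    · have hr0 : (r : ℕ) ≠ 0 := fun h => hr (Fin.ext h)
      exact ⟨by omega, by omega⟩
  · rintro t ⟨h1, ht⟩
    rw [LinearMap.proj_apply, colB_apply_of_le h1.le (by omega), if_neg (by simp only; omega)]

theorem isMinSpanIndex_of_mem_JSet (hA : IsDyckMatrix A) {x : Fin n} (hj : j ∈ JSet A)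
    (hjx : omegaB A j = x) : IsMinSpanIndex A (x + 1) j := by
  have hjn : j ∈ Set.Ioc n (2 * n) := ⟨hj.1, hj.2.1⟩
  have hpos := hA.omegaB_pos hjn
  obtain ⟨y, hyx⟩ : ∃ y : Fin n, (y : ℕ) + 1 = x := ⟨⟨x - 1, by omega⟩, by simp only; omega⟩
  obtain ⟨k, hk, rfl, hdrop⟩ := hA.exists_eq_add_one_of_mem_JSet hj (by omega)
  have hnk := hk.1
  have hk2 := hjn.2
  refine isMinSpanIndex_of_lt (by omega) (by omega) hk2 ?_ (rowPairSum x y)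
    (rowPairSum_colB_add_one_ne_zero (by rintro rfl; omega)) ?_
  · have hdiff := hA.colB_sub_colB_apply_ne_zero_iff hk hjn k.le_succ
    rw [colB_add_one x]
    refine single_mem_of_mem (Submodule.sub_mem _ (colB_mem_span ⟨by omega, k.le_succ⟩)
      (colB_mem_span ⟨by omega, le_rfl⟩)) ((hdiff x).2 ⟨hjx.le, hjx ▸ hdrop⟩)
      fun r hr hr0 => single_mem_span_colB ?_
    have hxr : (x : ℕ) < r :=
      lt_of_le_of_ne (hjx.ge.trans ((hdiff r).1 hr0).1) (Fin.val_ne_of_ne hr.symm)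
    exact ⟨by omega, by omega⟩
  · rintro t ⟨hxt, htk⟩
    rcases le_or_gt t n with htn | htn
    · exact rowPairSum_colB_eq_zero_of_le (by omega) htn (by omega) (by omega)
    · have hle := hA.omegaB_antitoneOn ⟨htn, by omega⟩ hk (by omega)
      exact hA.rowPairSum_colB_eq_zero hyx ⟨htn, by omega⟩ (by omega)

theorem isMinSpanIndex_of_forall_omegaB_ne (hA : IsDyckMatrix A) {x : Fin n} (hx : 0 < (x : ℕ))
    (hne : ∀ t ∈ Set.Ioc n (2 * n), omegaB A t ≠ x) : IsMinSpanIndex A (x + 1) x := by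
  obtain ⟨y, hyx⟩ : ∃ y : Fin n, (y : ℕ) + 1 = x := ⟨⟨x - 1, by omega⟩, by simp only; omega⟩
  refine isMinSpanIndex_of_gt (by omega) (by omega) ?_ (rowPairSum x y)
    (rowPairSum_colB_add_one_ne_zero (by rintro rfl; omega)) ?_
  · rw [colB_add_one x]
    refine single_mem_of_mem (colB_mem_span (t := n + 1) (.inl ⟨by omega, by omega⟩)) ?_
      fun r hr _ => single_mem_span_colB ?_
    · rw [hA.colB_apply_ne_zero_iff ⟨by omega, by omega⟩, hA.omegaB_add_one_self]
      exact x.isLt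
    · rcases lt_or_gt_of_ne hr with hrx | hxr
      · exact .inr ⟨by omega, by omega⟩
      · exact .inl ⟨by omega, by omega⟩
  · intro t ht
    rcases le_or_gt t n with htn | htn
    · apply rowPairSum_colB_eq_zero_of_le
      all_goals rcases ht with ⟨_, _⟩ | ⟨_, _⟩ <;> omega
    · have htm : t ∈ Set.Ioc n (2 * n) := ⟨htn, by rcases ht with ⟨_, _⟩ | ⟨_, _⟩ <;> omega⟩
      exact hA.rowPairSum_colB_eq_zero hyx htm (hne t htm)

theorem isMinSpanIndex_add_one (hA : IsDyckMatrix A) (hi : n < i) (hi2 : i < 2 * n)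
    (hJ : i + 1 ∉ JSet A) : IsMinSpanIndex A i (i + 1) := by
  have heq : colB A i = colB A (i + 1) := by
    by_contra hne
    exact hJ ⟨by omega, hi2, Ne.symm hne⟩
  have hn : 0 < n := by omega
  refine isMinSpanIndex_of_lt (by omega) i.lt_succ_self hi2 ?_ (LinearMap.proj ⟨0, hn⟩) ?_ ?_
  · rw [heq]
    exact colB_mem_span ⟨i.lt_succ_self, le_rfl⟩
  · exact (hA.colB_apply_ne_zero_iff ⟨hi, hi2.le⟩ _).2 (hA.omegaB_pos ⟨hi, hi2.le⟩)
  · rintro t ⟨hit, hti⟩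
    omega

theorem isMinSpanIndex_omegaB (hA : IsDyckMatrix A) (hi : i ∈ Set.Ioc n (2 * n))
    (hJ : i < 2 * n → i + 1 ∈ JSet A) : IsMinSpanIndex A i (omegaB A i) := by
  have hpos := hA.omegaB_pos hi
  have hle : omegaB A i ≤ n := omegaB_le
  have hni := hi.1
  let x : Fin n := ⟨omegaB A i - 1, by omega⟩
  have hx : (x : ℕ) + 1 = omegaB A i := Nat.sub_add_cancel hpos
  refine isMinSpanIndex_of_gt (by omega) hi.2 ?_ (LinearMap.proj x) ?_ ?_
  · refine mem_of_forall_single_mem fun r hr => single_mem_span_colB ?_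
    exact .inr ⟨by omega, (hA.colB_apply_ne_zero_iff hi r).1 hr⟩
  · exact (hA.colB_apply_ne_zero_iff hi x).2 (by omega)
  · rintro t (⟨hit, ht2⟩ | ⟨h1t, hti⟩)
    · have hlt : omegaB A t < omegaB A i := calc
        omegaB A t ≤ omegaB A (i + 1) :=
          hA.omegaB_antitoneOn ⟨by omega, by omega⟩ ⟨by omega, ht2⟩ hit
        _ < omegaB A i := (hA.add_one_mem_JSet_iff hni (by omega)).1 (hJ (by omega))
      rw [LinearMap.proj_apply, hA.colB_apply_of_mem_Ioc ⟨by omega, ht2⟩, if_neg (by omega)]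
    · rw [LinearMap.proj_apply, colB_apply_of_le h1t (by omega), if_neg (by omega)]

theorem isMinSpanIndex_piA_of_le (hA : IsDyckMatrix A) (hi : 1 < i) (hin : i ≤ n) :
    IsMinSpanIndex A i (piA A i) := by
  obtain ⟨x, rfl⟩ : ∃ x : Fin n, i = x + 1 := ⟨⟨i - 1, by omega⟩, by simp only; omega⟩
  rw [piA, if_neg hi.ne', if_pos hin]
  split_ifs with hex
  · exact hA.isMinSpanIndex_of_mem_JSet hex.choose_spec.1 hex.choose_spec.2
  · refine hA.isMinSpanIndex_of_forall_omegaB_ne (by omega) fun t ht htx => hex ?_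
    obtain ⟨j, hj, hjt⟩ := hA.exists_mem_JSet_omegaB_eq ht (by omega)
    exact ⟨j, hj, hjt.trans htx⟩

theorem isMinSpanIndex_piA_of_gt (hA : IsDyckMatrix A) (hi : i ∈ Set.Ioc n (2 * n)) :
    IsMinSpanIndex A i (piA A i) := by
  obtain ⟨hni, hi2⟩ := hi
  rw [piA, if_neg (by omega), if_neg (by omega)]
  split_ifs with hlt hJ
  · exact hA.isMinSpanIndex_omegaB ⟨hni, hi2⟩ fun _ => hJ
  · exact hA.isMinSpanIndex_add_one hni hlt hJ
  · obtain rfl : i = 2 * n := by omega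
    exact hA.isMinSpanIndex_omegaB ⟨hni, hi2⟩ fun h => absurd h hlt

end IsDyckMatrix

end

/-- For each `i ∈ {1,…,2n}`, among the `j` with `B_i ∈ span(B_{i+1},…,B_j)` there is a minimal
one in the shifted `i`-order, and it equals `π_A(i)`; moreover the element `j ∈ J` with
`ω(j) = i - 1` is unique when it exists. -/
theorem piA_eq_min_span_index
    {n : ℕ} (A : Matrix (Fin n) (Fin n) ℝ) (hA : IsDyckMatrix A) :
    (∀ i, 1 ≤ i → i ≤ 2 * n →
      SpannedBySegment A i (piA A i) ∧
      ∀ j, 1 ≤ j → j ≤ 2 * n → SpannedBySegment A i j →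
        shiftPos (2 * n) i (piA A i) ≤ shiftPos (2 * n) i j) ∧
    (∀ j j', j ∈ JSet A → j' ∈ JSet A → omegaB A j = omegaB A j' → j = j') := by
  refine ⟨fun i hi hi2 => ?_, fun j j' hj hj' h => hA.omegaB_strictAntiOn_JSet.injOn hj hj' h⟩
  change IsMinSpanIndex A i (piA A i)
  rcases le_or_gt i n with hin | hni
  · rcases hi.eq_or_lt with rfl | h1i
    · rw [piA, if_pos rfl]
      exact hA.isMinSpanIndex_one hin
    · exact hA.isMinSpanIndex_piA_of_le h1i hin
  · exact hA.isMinSpanIndex_piA_of_gt ⟨hni, hi2⟩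
end

section
/- For every positive integer n, the number of permutations of {1,…,2n} satisfying conditions (1)–(2) equals the n-th Catalan number (1/(n+1))·binom(2n, n); such permutations are in bijection with Dyck paths of length 2n. -/
/-- Conditions (1)–(2) for a permutation of `{1,…,2n}` (encoded 0-based on `Fin (2n)`: the
element `x` represents `x + 1`): writing `one` for the element `1` and `j_k = σ^k(1)`, `σ` is a
single `2n`-cycle through `1`; in `(1, j_1, …, j_{2n-1})` the elements `1,…,n` appear in
increasing order and the elements `n+1,…,2n` in decreasing order; and every prefix
`{1, j_1, …, j_k}` contains at least as many elements of `{1,…,n}` as of `{n+1,…,2n}`. -/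
def SatisfiesConds (n : ℕ) (hn : 0 < n) (σ : Equiv.Perm (Fin (2 * n))) : Prop :=
  ∀ one : Fin (2 * n), one = ⟨0, by omega⟩ →
    ((∀ m : Fin (2 * n), ∃ k, k < 2 * n ∧ (σ ^ k) one = m) ∧
     (∀ k l : ℕ, k < l → l < 2 * n →
        ((σ ^ k) one : ℕ) < n → ((σ ^ l) one : ℕ) < n →
        ((σ ^ k) one : ℕ) < ((σ ^ l) one : ℕ)) ∧
     (∀ k l : ℕ, k < l → l < 2 * n →
        n ≤ ((σ ^ k) one : ℕ) → n ≤ ((σ ^ l) one : ℕ) →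
        ((σ ^ l) one : ℕ) < ((σ ^ k) one : ℕ)) ∧
     (∀ k : ℕ, 1 ≤ k → k ≤ 2 * n - 1 →
        ((Finset.range (k + 1)).filter (fun t => n ≤ ((σ ^ t) one : ℕ))).card ≤
        ((Finset.range (k + 1)).filter (fun t => ((σ ^ t) one : ℕ) < n)).card))

/-! The cycle `(1 j₁ … j_{2n-1})` is read as the sequence `k ↦ j_k`, a shuffle of the increasing
word `1 … n` of small letters with the decreasing word `2n … n+1` of large letters. A shuffle is
determined by the positions of its small letters, since a strictly monotone function on a well-order
is determined by its range; conversely any set of `n` positions occurs, the letter at each position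
being read off from the number of small or large letters before it. Writing an up step for a small
letter and a down step for a large one turns the prefix condition into the defining condition of a
Dyck path, which in turn forces the first letter to be `1`. -/

open Equiv Set

section CyclicOrbits

variable {α : Type*}

theorem isCycleOn_univ_of_forall_exists_pow {σ : Perm α} {x : α}
    (h : ∀ y, ∃ k : ℕ, (σ ^ k) x = y) : σ.IsCycleOn univ := by
  have sameCycle (y : α) : σ.SameCycle x y :=
    let ⟨k, hk⟩ := h y
    ⟨k, by rwa [zpow_natCast]⟩
  exact ⟨σ.bijective.bijOn_univ, fun y _ z _ ↦ (sameCycle y).symm.trans (sameCycle z)⟩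

theorem pow_card_apply_eq_self [Fintype α] {σ : Perm α} {x : α}
    (h : ∀ y, ∃ k : ℕ, (σ ^ k) x = y) : (σ ^ Fintype.card α) x = x := by
  have hσ : σ.IsCycleOn (Finset.univ : Finset α) := by
    simpa only [Finset.coe_univ] using isCycleOn_univ_of_forall_exists_pow h
  exact hσ.pow_card_apply (Finset.mem_univ x)

theorem perm_ext_of_pow_apply_eq [Fintype α] {σ τ : Perm α} {x : α}
    (hσ : ∀ y, ∃ k < Fintype.card α, (σ ^ k) x = y)
    (h : ∀ k < Fintype.card α, (σ ^ k) x = (τ ^ k) x) : σ = τ := by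
  have hτ (y : α) : ∃ k : ℕ, (τ ^ k) x = y :=
    let ⟨k, hk, hy⟩ := hσ y
    ⟨k, (h k hk).symm.trans hy⟩
  have h_le (k : ℕ) (hk : k ≤ Fintype.card α) : (σ ^ k) x = (τ ^ k) x := by
    rcases hk.lt_or_eq with hk | rfl
    · exact h k hk
    · rw [pow_card_apply_eq_self fun y ↦ (hσ y).imp fun _ ↦ And.right, pow_card_apply_eq_self hτ]
  ext y
  obtain ⟨k, hk, rfl⟩ := hσ y
  calc σ ((σ ^ k) x) = (σ ^ (k + 1)) x := by rw [pow_succ', Perm.mul_apply]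
    _ = (τ ^ (k + 1)) x := h_le (k + 1) hk
    _ = τ ((σ ^ k) x) := by rw [pow_succ', Perm.mul_apply, h k hk]

theorem exists_perm_pow_apply_eq {N : ℕ} [NeZero N] {e : Fin N → α} (he : Function.Injective e) :
    ∃ σ : Perm α, ∀ k : Fin N, (σ ^ (k : ℕ)) (e 0) = e k := by
  classical
  refine ⟨(List.ofFn e).formPerm, fun k ↦ ?_⟩
  have := List.formPerm_pow_apply_getElem (List.ofFn e) (List.nodup_ofFn_ofInjective he) k 0
    (by simp [NeZero.pos N])
  simpa [Nat.mod_eq_of_lt k.isLt] using this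

end CyclicOrbits

theorem eqOn_of_strictMonoOn_of_image_eq {β γ : Type*} [LinearOrder β] [WellFoundedLT β]
    [PartialOrder γ] {f g : β → γ} {S : Set β} (hf : StrictMonoOn f S) (hg : StrictMonoOn g S)
    (h : f '' S = g '' S) : EqOn f g S := by
  rw [image_eq_range, image_eq_range] at h
  have hfg := ((strictMonoOn_iff_strictMono.1 hf).range_inj (strictMonoOn_iff_strictMono.1 hg)).1 h
  exact fun k hk ↦ congrFun hfg ⟨k, hk⟩

theorem count_add_count_not (p : ℕ → Prop) [DecidablePred p] (N : ℕ) :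
    Nat.count p N + Nat.count (fun k ↦ ¬p k) N = N := by
  induction N with
  | zero => simp
  | succ N ih => grind

/-- `s` restricted to `{0, …, N - 1}` is a shuffle of the increasing word `0 1 … (a - 1)` with the
decreasing word `(N - 1) … (a + 1) a`. Values of `s` at `k ≥ N` are unconstrained, so that the
infinite sequence of iterates of a permutation can be taken for `s`. -/
structure IsShuffle (a N : ℕ) (s : ℕ → ℕ) : Prop where
  image_eq : s '' Iio N = Iio N
  strictMonoOn : StrictMonoOn s (Iio N ∩ s ⁻¹' Iio a)
  strictAntiOn : StrictAntiOn s (Iio N ∩ s ⁻¹' Ici a)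

namespace IsShuffle

variable {a N : ℕ} {s t : ℕ → ℕ}

theorem congr (hs : IsShuffle a N s) (h : EqOn s t (Iio N)) : IsShuffle a N t where
  image_eq := h.image_eq ▸ hs.image_eq
  strictMonoOn := by
    rw [← h.inter_preimage_eq]
    exact hs.strictMonoOn.congr (h.mono inter_subset_left)
  strictAntiOn := by
    rw [← h.inter_preimage_eq]
    exact hs.strictAntiOn.congr (h.mono inter_subset_left)

theorem eqOn (hs : IsShuffle a N s) (ht : IsShuffle a N t) (h : ∀ k < N, s k < a ↔ t k < a) :
    EqOn s t (Iio N) := by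
  have h_low : Iio N ∩ s ⁻¹' Iio a = Iio N ∩ t ⁻¹' Iio a := by
    ext k
    exact and_congr_right (h k)
  have h_high : Iio N ∩ s ⁻¹' Ici a = Iio N ∩ t ⁻¹' Ici a := by
    ext k
    exact and_congr_right fun hk ↦ by simpa using not_congr (h k hk)
  have eq_low : EqOn s t (Iio N ∩ s ⁻¹' Iio a) := by
    refine eqOn_of_strictMonoOn_of_image_eq hs.strictMonoOn (h_low ▸ ht.strictMonoOn) ?_
    rw [image_inter_preimage, h_low, image_inter_preimage, hs.image_eq, ht.image_eq]
  have eq_high : EqOn s t (Iio N ∩ s ⁻¹' Ici a) := by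
    refine eqOn_of_strictMonoOn_of_image_eq (γ := ℕᵒᵈ) hs.strictAntiOn.dual_right
      (h_high ▸ ht.strictAntiOn).dual_right ?_
    change s '' _ = t '' _
    rw [image_inter_preimage, h_high, image_inter_preimage, hs.image_eq, ht.image_eq]
  intro k hk
  rcases lt_or_ge (s k) a with hka | hka
  · exact eq_low ⟨hk, hka⟩
  · exact eq_high ⟨hk, hka⟩

theorem count_lt (hs : IsShuffle a N s) (ha : a ≤ N) : Nat.count (fun k ↦ s k < a) N = a :=
  calc Nat.count (fun k ↦ s k < a) N = (Iio N ∩ s ⁻¹' Iio a).ncard := by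
        rw [Nat.count_eq_card_filter_range, ← ncard_coe_finset]
        congr 1
        ext k
        simp
    _ = (s '' (Iio N ∩ s ⁻¹' Iio a)).ncard := (hs.strictMonoOn.injOn.ncard_image).symm
    _ = (Iio a).ncard := by
        rw [image_inter_preimage, hs.image_eq, inter_eq_right.2 (Iio_subset_Iio ha)]
    _ = a := by simp

end IsShuffle

/-- The shuffle of length `N` whose small letters stand at the positions satisfying `p`; see
`isShuffle_shuffle`. The truncated subtractions are harmless for `k < N`. -/
def shuffle (p : ℕ → Prop) [DecidablePred p] (N k : ℕ) : ℕ :=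
  if p k then Nat.count p k else N - 1 - Nat.count (fun j ↦ ¬p j) k

section Shuffle

variable (p : ℕ → Prop) [DecidablePred p] {N k : ℕ}

theorem shuffle_lt (hk : k < N) : shuffle p N k < N := by
  have := Nat.count_le (p := p) (n := k)
  unfold shuffle
  split_ifs <;> omega

theorem shuffle_lt_count_iff (hk : k < N) : shuffle p N k < Nat.count p N ↔ p k := by
  unfold shuffle
  split_ifs with hpk
  · exact iff_of_true (Nat.count_strict_mono hpk hk) hpk
  · have h_lt : Nat.count (fun j ↦ ¬p j) k < Nat.count (fun j ↦ ¬p j) N :=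
      Nat.count_strict_mono hpk hk
    have h_add := count_add_count_not p N
    exact iff_of_false (by omega) hpk

theorem strictMonoOn_shuffle : StrictMonoOn (shuffle p N) {k | p k} := by
  intro k (hk : p k) l (hl : p l) hkl
  simpa only [shuffle, if_pos hk, if_pos hl] using Nat.count_strict_mono hk hkl

theorem strictAntiOn_shuffle : StrictAntiOn (shuffle p N) (Iio N ∩ {k | ¬p k}) := by
  rintro k ⟨-, hk : ¬p k⟩ l ⟨hlN : l < N, hl : ¬p l⟩ hkl
  have h_lt : Nat.count (fun j ↦ ¬p j) k < Nat.count (fun j ↦ ¬p j) l :=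
    Nat.count_strict_mono hk hkl
  have h_le : Nat.count (fun j ↦ ¬p j) l ≤ l := Nat.count_le _
  simp only [shuffle, if_neg hk, if_neg hl]
  omega

theorem injOn_shuffle : InjOn (shuffle p N) (Iio N) := by
  intro k hk l hl hkl
  have hpkl : p k ↔ p l := by rw [← shuffle_lt_count_iff p hk, hkl, shuffle_lt_count_iff p hl]
  by_cases hpk : p k
  · exact (strictMonoOn_shuffle p).injOn hpk (hpkl.1 hpk) hkl
  · exact (strictAntiOn_shuffle p).injOn ⟨hk, hpk⟩ ⟨hl, hpkl.not.1 hpk⟩ hkl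

theorem isShuffle_shuffle : IsShuffle (Nat.count p N) N (shuffle p N) where
  image_eq := ((finite_Iio N).injOn_iff_bijOn_of_mapsTo fun _ ↦ shuffle_lt p).1
    (injOn_shuffle p) |>.image_eq
  strictMonoOn := (strictMonoOn_shuffle p).mono fun _ ⟨hk, hlow⟩ ↦
    (shuffle_lt_count_iff p hk).1 hlow
  strictAntiOn := (strictAntiOn_shuffle p).mono fun _ ⟨hk, hhigh⟩ ↦
    ⟨hk, fun hpk ↦ (mem_Ici.1 hhigh).not_gt ((shuffle_lt_count_iff p hk).2 hpk)⟩

end Shuffle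

open DyckStep

/-- The word of length `N` with up steps at the positions satisfying `p`, down steps elsewhere. -/
def stepWord (p : ℕ → Prop) [DecidablePred p] (N : ℕ) : List DyckStep :=
  (List.range N).map fun k ↦ if p k then U else D

section StepWord

variable (p q : ℕ → Prop) [DecidablePred p] [DecidablePred q] (N : ℕ)

theorem count_U_stepWord : (stepWord p N).count U = Nat.count p N := by
  rw [stepWord, List.count, List.countP_map, Nat.count]
  congr 1
  ext k
  by_cases hk : p k <;> simp [hk]

theorem count_D_stepWord : (stepWord p N).count D = Nat.count (fun k ↦ ¬p k) N := by
  rw [stepWord, List.count, List.countP_map, Nat.count]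
  congr 1
  ext k
  by_cases hk : p k <;> simp [hk]

theorem take_stepWord (i : ℕ) : (stepWord p N).take i = stepWord p (min i N) := by
  rw [stepWord, ← List.map_take, List.take_range, stepWord]

variable {p q N} in
theorem stepWord_inj : stepWord p N = stepWord q N ↔ ∀ k < N, p k ↔ q k := by
  simp only [stepWord, List.map_inj_left, List.mem_range]
  refine forall₂_congr fun k _ ↦ ?_
  by_cases hp : p k <;> by_cases hq : q k <;> simp [hp, hq]

variable {p N} in
theorem forall_count_D_take_stepWord_le_iff (h0 : p 0) :
    (∀ i, ((stepWord p N).take i).count D ≤ ((stepWord p N).take i).count U) ↔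
      ∀ k, 1 ≤ k → k ≤ N - 1 → ((Finset.range (k + 1)).filter fun t ↦ ¬p t).card ≤
        ((Finset.range (k + 1)).filter p).card := by
  simp only [take_stepWord, count_D_stepWord, count_U_stepWord, ← Nat.count_eq_card_filter_range]
  constructor
  · intro h k _ hk
    simpa only [show min (k + 1) N = k + 1 by omega] using h (k + 1)
  · intro h i
    rcases hi : min i N with _ | _ | k
    · simp
    · simp [Nat.count_succ, h0]
    · exact h (k + 1) (by omega) (by omega)

theorem stepWord_getElem?_eq_some_U (l : List DyckStep) :
    stepWord (fun k ↦ l[k]? = some U) l.length = l := by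
  refine List.ext_getElem (by simp [stepWord]) fun k _ hk ↦ ?_
  rcases DyckStep.dichotomy l[k] with h | h <;> simp [stepWord, hk, h]

end StepWord

section OrbitSeq

variable {N : ℕ} [NeZero N]

/-- The sequence `1, j_1, j_2, …` of the iterates `j_k = σ^k(1)`, with every letter lowered by one
as in `SatisfiesConds`. -/
def orbitSeq (σ : Perm (Fin N)) (k : ℕ) : ℕ := (σ ^ k) 0

theorem exists_perm_orbitSeq_eqOn {s : ℕ → ℕ} (hs : MapsTo s (Iio N) (Iio N))
    (hinj : InjOn s (Iio N)) (h0 : s 0 = 0) :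
    ∃ σ : Perm (Fin N), EqOn s (orbitSeq σ) (Iio N) := by
  let e (k : Fin N) : Fin N := ⟨s k, hs k.isLt⟩
  have he : Function.Injective e := fun k l hkl ↦
    Fin.ext (hinj k.isLt l.isLt (congrArg Fin.val hkl))
  have he0 : e 0 = 0 := Fin.ext h0
  obtain ⟨σ, hσ⟩ := exists_perm_pow_apply_eq he
  refine ⟨σ, fun k hk ↦ ?_⟩
  rw [orbitSeq, ← he0, hσ ⟨k, hk⟩]

theorem perm_ext_of_orbitSeq_eqOn {σ τ : Perm (Fin N)}
    (hσ : Iio N ⊆ orbitSeq σ '' Iio N) (h : EqOn (orbitSeq σ) (orbitSeq τ) (Iio N)) : σ = τ := by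
  refine perm_ext_of_pow_apply_eq (x := 0) (fun y ↦ ?_) fun k hk ↦ ?_
  · obtain ⟨k, hk, hky⟩ := hσ y.isLt
    exact ⟨k, by simpa using hk, Fin.ext hky⟩
  · exact Fin.ext (h (by simpa using hk))

end OrbitSeq

section Correspondence

variable {n : ℕ} [NeZero n]

/-- The up-down word recording which of the letters `1, j_1, …, j_{2n-1}` are at most `n`. -/
def orbitWord (σ : Perm (Fin (2 * n))) : List DyckStep :=
  stepWord (fun k ↦ orbitSeq σ k < n) (2 * n)

theorem satisfiesConds_iff {σ : Perm (Fin (2 * n))} :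
    SatisfiesConds n (NeZero.pos n) σ ↔ IsShuffle n (2 * n) (orbitSeq σ) ∧
      ∀ i, ((orbitWord σ).take i).count D ≤ ((orbitWord σ).take i).count U := by
  have h0 : orbitSeq σ 0 < n := NeZero.pos n
  rw [orbitWord, forall_count_D_take_stepWord_le_iff h0]
  simp only [not_lt]
  constructor
  · intro h
    obtain ⟨hsurj, hmono, hanti, hballot⟩ := h _ rfl
    have h_image : orbitSeq σ '' Iio (2 * n) = Iio (2 * n) := by
      refine Subset.antisymm (image_subset_iff.2 fun k _ ↦ ((σ ^ k) 0).isLt) fun v hv ↦ ?_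
      obtain ⟨k, hk, hkv⟩ := hsurj ⟨v, hv⟩
      exact ⟨k, hk, congrArg Fin.val hkv⟩
    exact ⟨⟨h_image, fun k hk l hl hkl ↦ hmono k l hkl hl.1 hk.2 hl.2,
      fun k hk l hl hkl ↦ hanti k l hkl hl.1 hk.2 hl.2⟩, hballot⟩
  · rintro ⟨hs, hballot⟩ _ rfl
    refine ⟨fun m ↦ ?_, fun k l hkl hl hk hl' ↦ hs.strictMonoOn ⟨hkl.trans hl, hk⟩ ⟨hl, hl'⟩ hkl,
      fun k l hkl hl hk hl' ↦ hs.strictAntiOn ⟨hkl.trans hl, hk⟩ ⟨hl, hl'⟩ hkl, hballot⟩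
    obtain ⟨k, hk, hkm⟩ := hs.image_eq.ge m.isLt
    exact ⟨k, hk, Fin.ext hkm⟩

/-- The Dyck word of a permutation satisfying conditions (1)–(2): its `orbitWord`. -/
def toDyckWord (σ : {σ : Perm (Fin (2 * n)) // SatisfiesConds n (NeZero.pos n) σ}) :
    {w : DyckWord // w.semilength = n} :=
  have hs := (satisfiesConds_iff.1 σ.2).1
  have hU : (orbitWord σ.1).count U = n := by
    rw [orbitWord, count_U_stepWord, hs.count_lt (by omega)]
  have hD : (orbitWord σ.1).count D = n := by
    have h_add := count_add_count_not (fun k ↦ orbitSeq σ.1 k < n) (2 * n)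
    rw [hs.count_lt (by omega)] at h_add
    rw [orbitWord, count_D_stepWord]
    omega
  ⟨{ toList := orbitWord σ.1
     count_U_eq_count_D := hU.trans hD.symm
     count_D_le_count_U := (satisfiesConds_iff.1 σ.2).2 }, hU⟩

theorem toDyckWord_injective : Function.Injective (toDyckWord (n := n)) := by
  rintro ⟨σ, hσ⟩ ⟨τ, hτ⟩ h
  have h_word : orbitWord σ = orbitWord τ := congrArg (fun w ↦ w.1.toList) h
  have hsσ := (satisfiesConds_iff.1 hσ).1
  have hsτ := (satisfiesConds_iff.1 hτ).1
  have h_orbit : EqOn (orbitSeq σ) (orbitSeq τ) (Iio (2 * n)) :=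
    hsσ.eqOn hsτ (stepWord_inj.1 h_word)
  exact Subtype.ext (perm_ext_of_orbitSeq_eqOn hsσ.image_eq.ge h_orbit)

theorem exists_isShuffle_orbitSeq_and_orbitWord_eq {w : DyckWord} (hw : w.semilength = n) :
    ∃ σ : Perm (Fin (2 * n)), IsShuffle n (2 * n) (orbitSeq σ) ∧ orbitWord σ = w.toList := by
  let p (k : ℕ) : Prop := w.toList[k]? = some U
  have h_word : stepWord p (2 * n) = w.toList := by
    rw [← hw, w.two_mul_semilength_eq_length, stepWord_getElem?_eq_some_U]
  have h_count : Nat.count p (2 * n) = n := by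
    rw [← count_U_stepWord, h_word, ← hw, DyckWord.semilength]
  have hp0 : p 0 := by
    have h_ne : w.toList ≠ [] := by
      rw [← List.length_pos_iff, ← w.two_mul_semilength_eq_length, hw]
      exact NeZero.pos (2 * n)
    simp only [p, ← List.head?_eq_getElem?, List.head?_eq_some_head h_ne, w.head_eq_U]
  have h0 : shuffle p (2 * n) 0 = 0 := by simp [shuffle, hp0]
  obtain ⟨σ, hσ⟩ := exists_perm_orbitSeq_eqOn (fun _ ↦ shuffle_lt p) (injOn_shuffle p) h0
  have h_shuffle : IsShuffle n (2 * n) (shuffle p (2 * n)) := by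
    simpa only [h_count] using isShuffle_shuffle p (N := 2 * n)
  refine ⟨σ, h_shuffle.congr hσ, ?_⟩
  rw [← h_word, orbitWord, stepWord_inj]
  intro k hk
  rw [← hσ hk, ← shuffle_lt_count_iff p hk, h_count]

theorem toDyckWord_surjective : Function.Surjective (toDyckWord (n := n)) := by
  rintro ⟨w, hw⟩
  obtain ⟨σ, hs, h_word⟩ := exists_isShuffle_orbitSeq_and_orbitWord_eq hw
  have hσ : SatisfiesConds n (NeZero.pos n) σ :=
    satisfiesConds_iff.2 ⟨hs, h_word ▸ w.count_D_le_count_U⟩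
  exact ⟨⟨σ, hσ⟩, Subtype.ext (DyckWord.ext h_word)⟩

end Correspondence

/-- The number of permutations of `{1,…,2n}` satisfying conditions (1)–(2) is the `n`-th
Catalan number `(1/(n+1))·C(2n,n)`, and such permutations are in bijection with Dyck paths of
length `2n` (Dyck words of semilength `n`). -/
theorem card_satisfiesConds_eq_catalan (n : ℕ) (hn : 0 < n) :
    Nat.card {σ : Equiv.Perm (Fin (2 * n)) // SatisfiesConds n hn σ} =
      Nat.choose (2 * n) n / (n + 1) ∧
    Nonempty ({σ : Equiv.Perm (Fin (2 * n)) // SatisfiesConds n hn σ} ≃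
      {w : DyckWord // w.semilength = n}) := by
  have : NeZero n := .of_pos hn
  let e : {σ : Equiv.Perm (Fin (2 * n)) // SatisfiesConds n hn σ} ≃
      {w : DyckWord // w.semilength = n} :=
    Equiv.ofBijective toDyckWord ⟨toDyckWord_injective, toDyckWord_surjective⟩
  refine ⟨?_, ⟨e⟩⟩
  calc Nat.card {σ : Equiv.Perm (Fin (2 * n)) // SatisfiesConds n hn σ}
      = Nat.card {w : DyckWord // w.semilength = n} := Nat.card_congr e
    _ = catalan n := by
        rw [Nat.card_eq_fintype_card, DyckWord.card_dyckWord_semilength_eq_catalan]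
    _ = Nat.choose (2 * n) n / (n + 1) := by
        rw [catalan_eq_centralBinom_div, Nat.centralBinom_eq_two_mul_choose]
end

section
/- The map A ↦ π_A^{-1} is a bijection from the set of n × n Dyck matrices onto the set of permutations of {1,…,2n} satisfying conditions (1)–(2). -/
/-! A permutation satisfying (1) and (2) amounts to the word listing `{1, …, 2n}` that is its cycle
written from `1`. By (1) such a word is determined by the numbers `h j` of small elements (those at
most `n`) listed before the large element `n + j + 1`, for `j < n`; these are nonincreasing in `j`,
and (2) says that the `i`-th small element precedes the `i`-th large one, that is, `h j ≥ n - j`.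
These are exactly the sequences of column weights of Dyck matrices, and a Dyck matrix is determined
by its column weights. Finally, if `h` is the sequence of column weights of `A`, then `π_A` moves
every letter of the word to the cyclically preceding one, so the word is the cycle of `π_A⁻¹`. -/

section OrbitPosition

variable {α : Type*} [Fintype α]

/-- `IsOrbitPosition σ a p` says that the cycle of `σ`, written starting from `a`, lists all of `α`
and that `p x` is the place, counted from `0`, at which it lists `x`. -/
def IsOrbitPosition (σ : Equiv.Perm α) (a : α) (p : α → ℕ) : Prop :=
  ∀ k < Fintype.card α, p ((σ ^ k) a) = k

namespace IsOrbitPosition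

variable {σ : Equiv.Perm α} {a : α} {p q : α → ℕ}

theorem exists_pow_eq (hp : IsOrbitPosition σ a p) (x : α) :
    ∃ k < Fintype.card α, (σ ^ k) a = x := by
  have hinj : Function.Injective fun k : Fin (Fintype.card α) => (σ ^ (k : ℕ)) a :=
    fun k l hkl => Fin.ext <| by rw [← hp k k.isLt, ← hp l l.isLt]; exact congrArg p hkl
  obtain ⟨k, hk⟩ := ((Fintype.bijective_iff_injective_and_card _).2
    ⟨hinj, Fintype.card_fin _⟩).surjective x
  exact ⟨k, k.isLt, hk⟩

theorem lt_card (hp : IsOrbitPosition σ a p) (x : α) : p x < Fintype.card α := by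
  obtain ⟨k, hk, rfl⟩ := hp.exists_pow_eq x
  rwa [hp k hk]

theorem pow_apply (hp : IsOrbitPosition σ a p) (x : α) : (σ ^ p x) a = x := by
  obtain ⟨k, hk, rfl⟩ := hp.exists_pow_eq x
  rw [hp k hk]

theorem injective (hp : IsOrbitPosition σ a p) : Function.Injective p := fun x y hxy => by
  rw [← hp.pow_apply x, hxy, hp.pow_apply]

protected theorem unique (hp : IsOrbitPosition σ a p) (hq : IsOrbitPosition σ a q) : p = q := by
  ext x
  rw [← hq _ (hp.lt_card x), hp.pow_apply]

theorem pow_card_apply (hp : IsOrbitPosition σ a p) : (σ ^ Fintype.card α) a = a := by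
  have hcycle : σ.IsCycleOn (Finset.univ : Finset α) := by
    refine ⟨by simp, fun x _ y _ => ?_⟩
    exact .trans (.symm ⟨p x, by simpa using hp.pow_apply x⟩) ⟨p y, by simpa using hp.pow_apply y⟩
  exact hcycle.pow_card_apply (Finset.mem_univ a)

end IsOrbitPosition

theorem isOrbitPosition_iff [DecidableEq α] {σ : Equiv.Perm α} {a : α} {p : α → ℕ} :
    IsOrbitPosition σ a p ↔
      p a = 0 ∧ ∀ x, p x + 1 = if σ x = a then Fintype.card α else p (σ x) := by
  constructor
  · intro hp
    have ha : p a = 0 := hp 0 (Fintype.card_pos_iff.2 ⟨a⟩)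
    refine ⟨ha, fun x => ?_⟩
    have hσx : σ x = (σ ^ (p x + 1)) a := by
      rw [pow_succ', Equiv.Perm.mul_apply, hp.pow_apply]
    obtain hlast | hlt := (Nat.succ_le_of_lt (hp.lt_card x)).eq_or_lt
    · have hcycle : σ x = a := by rw [hσx, ← Nat.succ_eq_add_one, hlast, hp.pow_card_apply]
      rw [if_pos hcycle, ← hlast]
    · have hpos : p (σ x) = p x + 1 := by rw [hσx, hp _ hlt]
      rw [if_neg (fun h => by rw [h, ha] at hpos; omega), hpos]
  · rintro ⟨ha, hstep⟩ k
    induction k with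
    | zero => exact fun _ => ha
    | succ k ih =>
      intro hk
      have hpos := hstep ((σ ^ k) a)
      rw [ih (by omega), ← Equiv.Perm.mul_apply, ← pow_succ'] at hpos
      split_ifs at hpos with hlast
      · exact absurd hpos hk.ne
      · exact hpos.symm

theorem exists_isOrbitPosition_of_exists_pow_eq {σ : Equiv.Perm α} {a : α}
    (h : ∀ x, ∃ k < Fintype.card α, (σ ^ k) a = x) : ∃ p, IsOrbitPosition σ a p := by
  choose p hp_lt hp using h
  have hinj : Function.Injective fun k : Fin (Fintype.card α) => (σ ^ (k : ℕ)) a :=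
    ((Fintype.bijective_iff_surjective_and_card _).2
      ⟨fun x => ⟨⟨p x, hp_lt x⟩, hp x⟩, Fintype.card_fin _⟩).injective
  exact ⟨p, fun k hk => congrArg Fin.val (@hinj ⟨_, hp_lt _⟩ ⟨k, hk⟩ (hp _))⟩

theorem exists_perm_isOrbitPosition {a : α} {p : α → ℕ} (hinj : Function.Injective p)
    (hlt : ∀ x, p x < Fintype.card α) (ha : p a = 0) :
    ∃ σ : Equiv.Perm α, IsOrbitPosition σ a p := by
  obtain ⟨m, hm⟩ : ∃ m, Fintype.card α = m + 1 :=
    Nat.exists_eq_succ_of_ne_zero (Fintype.card_pos_iff.2 ⟨a⟩).ne'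
  let e : α ≃ Fin (m + 1) := Equiv.ofBijective (fun x => ⟨p x, hm ▸ hlt x⟩) <|
    (Fintype.bijective_iff_injective_and_card _).2
      ⟨fun x y hxy => hinj (congrArg Fin.val hxy), by simpa using hm⟩
  refine ⟨(e.trans (finRotate _)).trans e.symm, fun k => ?_⟩
  induction k with
  | zero => exact fun _ => ha
  | succ k ih =>
    intro hk
    have hk_pos := ih (by omega)
    set x := (((e.trans (finRotate _)).trans e.symm) ^ k) a
    have he : e x = ⟨k, by omega⟩ := Fin.ext hk_pos
    rw [pow_succ', Equiv.Perm.mul_apply]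
    change (e (e.symm (finRotate _ (e x))) : ℕ) = k + 1
    rw [Equiv.apply_symm_apply, he, finRotate_of_lt (by omega)]

theorem IsOrbitPosition.card_filter_pow_mem_range {ι : Type*} [Fintype ι] {σ : Equiv.Perm α}
    {a : α} {p : α → ℕ} (hp : IsOrbitPosition σ a p) {f : ι → α} (hf : Function.Injective f)
    {P : α → Prop} [DecidablePred P] (hP : ∀ x, P x ↔ x ∈ Set.range f) {k : ℕ}
    (hk : k ≤ Fintype.card α) :
    ((Finset.range k).filter fun t => P ((σ ^ t) a)).card
      = (Finset.univ.filter fun i => p (f i) < k).card := by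
  refine (Finset.card_bij (fun i _ => p (f i)) (fun i hi => ?_) (fun i _ j _ hij => ?_) ?_).symm
  · simpa [hp.pow_apply, hP] using hi
  · exact hf (hp.injective hij)
  · intro t ht
    simp only [Finset.mem_filter, Finset.mem_range, hP] at ht
    obtain ⟨htk, i, hi⟩ := ht
    have hpi : p (f i) = t := by rw [hi, hp t (htk.trans_le hk)]
    exact ⟨i, by simpa [hpi] using htk, hpi⟩

theorem eq_card_filter_lt {p : α → ℕ} (hinj : Function.Injective p)
    (hlt : ∀ x, p x < Fintype.card α) (x : α) :
    p x = (Finset.univ.filter fun y => p y < p x).card := by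
  have himage : Finset.univ.image p = Finset.range (Fintype.card α) :=
    Finset.eq_of_subset_of_card_le (by simpa [Finset.subset_iff] using hlt)
      (by simp [Finset.card_image_of_injective _ hinj])
  have hfilter : (Finset.univ.filter fun y => p y < p x).image p = Finset.range (p x) := by
    rw [← Finset.filter_image (p := (· < p x)), himage]
    ext k
    have := hlt x
    simp only [Finset.mem_filter, Finset.mem_range]
    omega
  rw [← Finset.card_image_of_injective _ hinj, hfilter, Finset.card_range]

theorem eq_of_forall_lt_iff_lt {p q : α → ℕ} (hp : Function.Injective p)
    (hp_lt : ∀ x, p x < Fintype.card α) (hq : Function.Injective q)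
    (hq_lt : ∀ x, q x < Fintype.card α) (h : ∀ x y, p x < p y ↔ q x < q y) : p = q := by
  ext x
  rw [eq_card_filter_lt hp hp_lt, eq_card_filter_lt hq hq_lt]
  simp only [h]

end OrbitPosition

/-- The element `s + 1` of the increasing half `{1, …, n}`, encoded from `0`. -/
def smallElt {n : ℕ} (s : Fin n) : Fin (2 * n) := s.castLE (by omega)

/-- The element `n + j + 1` of the decreasing half `{n + 1, …, 2n}`, encoded from `0`; it belongs to
the column `n + j + 1` of `ψ(A)`, that is, to the column `j` of `A`. -/
def largeElt {n : ℕ} (j : Fin n) : Fin (2 * n) := ⟨n + j, by omega⟩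

section Elements

variable {n : ℕ}

@[simp]
theorem val_smallElt (s : Fin n) : (smallElt s : ℕ) = s := rfl

@[simp]
theorem val_largeElt (j : Fin n) : (largeElt j : ℕ) = n + j := rfl

theorem smallElt_injective : Function.Injective (smallElt (n := n)) :=
  Fin.castLE_injective (by omega)

theorem largeElt_injective : Function.Injective (largeElt (n := n)) := fun _ _ h =>
  Fin.ext (Nat.add_left_cancel (Fin.ext_iff.1 h))

theorem smallElt_ne_largeElt (s j : Fin n) : smallElt s ≠ largeElt j := fun h => by
  have := congrArg Fin.val h
  simp only [val_smallElt, val_largeElt] at this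
  omega

theorem lt_iff_mem_range_smallElt (x : Fin (2 * n)) : (x : ℕ) < n ↔ x ∈ Set.range smallElt :=
  ⟨fun hx => ⟨⟨x, hx⟩, rfl⟩, by rintro ⟨s, rfl⟩; exact s.isLt⟩

theorem le_iff_mem_range_largeElt (x : Fin (2 * n)) : n ≤ (x : ℕ) ↔ x ∈ Set.range largeElt :=
  ⟨fun hx => ⟨⟨x - n, by omega⟩, Fin.ext (by simp only [val_largeElt]; omega)⟩,
    by rintro ⟨j, rfl⟩; exact Nat.le_add_right n j⟩

theorem exists_eq_smallElt_or_largeElt (x : Fin (2 * n)) :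
    (∃ s, smallElt s = x) ∨ ∃ j, largeElt j = x :=
  (lt_or_ge (x : ℕ) n).imp (lt_iff_mem_range_smallElt x).1 (le_iff_mem_range_largeElt x).1

end Elements

/-- The place function of a word on `{1, …, 2n}` satisfying (1) and (2). Given (1), condition (2)
amounts to listing the `i`-th small element before the `i`-th large one, for every `i`; the latter
is the largest but `i - 1`, whence the `Fin.rev`. -/
structure IsBallotPosition {n : ℕ} (p : Fin (2 * n) → ℕ) : Prop where
  strictMono_smallElt : StrictMono fun s => p (smallElt s)
  strictAnti_largeElt : StrictAnti fun j => p (largeElt j)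
  smallElt_lt_largeElt_rev : ∀ s, p (smallElt s) < p (largeElt s.rev)

section BallotPosition

variable {n : ℕ} {p q : Fin (2 * n) → ℕ}

theorem IsBallotPosition.lt_iff_lt (hp : IsBallotPosition p) (hp_inj : Function.Injective p)
    (hq : IsBallotPosition q) (hq_inj : Function.Injective q)
    (h : ∀ s j, p (smallElt s) < p (largeElt j) ↔ q (smallElt s) < q (largeElt j))
    (x y : Fin (2 * n)) : p x < p y ↔ q x < q y := by
  have h_symm (s j : Fin n) :
      p (largeElt j) < p (smallElt s) ↔ q (largeElt j) < q (smallElt s) := by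
    have hp_ne := hp_inj.ne (smallElt_ne_largeElt s j)
    have hq_ne := hq_inj.ne (smallElt_ne_largeElt s j)
    have := h s j
    omega
  obtain ⟨s, rfl⟩ | ⟨j, rfl⟩ := exists_eq_smallElt_or_largeElt x <;>
    obtain ⟨t, rfl⟩ | ⟨i, rfl⟩ := exists_eq_smallElt_or_largeElt y
  · exact hp.strictMono_smallElt.lt_iff_lt.trans hq.strictMono_smallElt.lt_iff_lt.symm
  · exact h s i
  · exact h_symm t j
  · exact hp.strictAnti_largeElt.lt_iff_gt.trans hq.strictAnti_largeElt.lt_iff_gt.symm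

theorem IsBallotPosition.card_largeElt_le_card_smallElt (hp : IsBallotPosition p) (k : ℕ) :
    (Finset.univ.filter fun j => p (largeElt j) < k).card
      ≤ (Finset.univ.filter fun s => p (smallElt s) < k).card := by
  refine Finset.card_le_card_of_injOn Fin.rev (fun j hj => ?_) Fin.rev_injective.injOn
  simp only [Finset.coe_filter, Finset.mem_univ, true_and, Set.mem_ofPred_eq] at hj ⊢
  have := hp.smallElt_lt_largeElt_rev j.rev
  rw [Fin.rev_rev] at this
  exact this.trans hj

theorem smallElt_lt_largeElt_rev_of_card_le (hinj : Function.Injective p)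
    (hmono : StrictMono fun s => p (smallElt s)) (hanti : StrictAnti fun j => p (largeElt j))
    (s : Fin n) (hcard : (Finset.univ.filter fun j => p (largeElt j) ≤ p (largeElt s.rev)).card
      ≤ (Finset.univ.filter fun t => p (smallElt t) ≤ p (largeElt s.rev)).card) :
    p (smallElt s) < p (largeElt s.rev) := by
  by_contra! hle
  have hlt := hle.lt_of_ne (hinj.ne (smallElt_ne_largeElt s s.rev)).symm
  have hlarge : (Finset.univ.filter fun j => p (largeElt j) ≤ p (largeElt s.rev))
      = Finset.Ici s.rev := by
    ext j
    simpa using hanti.le_iff_ge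
  have hsmall : (Finset.univ.filter fun t => p (smallElt t) ≤ p (largeElt s.rev))
      ⊆ Finset.Iio s := fun t ht => by
    simp only [Finset.mem_filter, Finset.mem_univ, true_and] at ht
    exact Finset.mem_Iio.2 (hmono.lt_iff_lt.1 (ht.trans_lt hlt))
  have := Finset.card_le_card hsmall
  rw [hlarge, Fin.card_Ici, Fin.val_rev] at hcard
  rw [Fin.card_Iio] at this
  omega

variable {σ : Equiv.Perm (Fin (2 * n))}

theorem IsBallotPosition.satisfiesConds (hp : IsBallotPosition p) (hn : 0 < n)
    (hσ : IsOrbitPosition σ (smallElt ⟨0, hn⟩) p) : SatisfiesConds n hn σ := by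
  intro one hone
  obtain rfl : one = smallElt ⟨0, hn⟩ := hone
  have hpos (k : ℕ) (hk : k < 2 * n) : p ((σ ^ k) (smallElt ⟨0, hn⟩)) = k :=
    hσ k (by simpa using hk)
  refine ⟨fun x => by simpa using hσ.exists_pow_eq x, fun k l hkl hl hk_small hl_small => ?_,
    fun k l hkl hl hk_large hl_large => ?_, fun k _ hk => ?_⟩
  · obtain ⟨s, hs⟩ := (lt_iff_mem_range_smallElt _).1 hk_small
    obtain ⟨t, ht⟩ := (lt_iff_mem_range_smallElt _).1 hl_small
    have hst : s < t := hp.strictMono_smallElt.lt_iff_lt.1 <| by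
      simpa only [hs, ht, hpos k (hkl.trans hl), hpos l hl] using hkl
    rwa [← hs, ← ht]
  · obtain ⟨i, hi⟩ := (le_iff_mem_range_largeElt _).1 hk_large
    obtain ⟨j, hj⟩ := (le_iff_mem_range_largeElt _).1 hl_large
    have hji : j < i := hp.strictAnti_largeElt.lt_iff_gt.1 <| by
      simpa only [hi, hj, hpos k (hkl.trans hl), hpos l hl] using hkl
    rw [← hi, ← hj]
    exact Nat.add_lt_add_left hji n
  · have hk : k + 1 ≤ Fintype.card (Fin (2 * n)) := by rw [Fintype.card_fin]; omega
    rw [hσ.card_filter_pow_mem_range largeElt_injective le_iff_mem_range_largeElt hk,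
      hσ.card_filter_pow_mem_range smallElt_injective lt_iff_mem_range_smallElt hk]
    exact hp.card_largeElt_le_card_smallElt (k + 1)

theorem SatisfiesConds.isBallotPosition {hn : 0 < n} (hconds : SatisfiesConds n hn σ)
    (hσ : IsOrbitPosition σ (smallElt ⟨0, hn⟩) p) : IsBallotPosition p := by
  obtain ⟨-, hsmall, hlarge, hcount⟩ := hconds (smallElt ⟨0, hn⟩) rfl
  have hlt (x : Fin (2 * n)) : p x < 2 * n := by simpa using hσ.lt_card x
  have hmono : StrictMono fun s => p (smallElt s) := fun s t hst => by
    by_contra! hle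
    have hts := hle.lt_of_ne (hσ.injective.ne (smallElt_injective.ne hst.ne'))
    have := hsmall _ _ hts (hlt _)
    simp only [hσ.pow_apply, val_smallElt] at this
    exact absurd (this t.isLt s.isLt) hst.not_gt
  have hanti : StrictAnti fun j => p (largeElt j) := fun i j hij => by
    by_contra! hle
    have hij' := hle.lt_of_ne (hσ.injective.ne (largeElt_injective.ne hij.ne))
    have := hlarge _ _ hij' (hlt _)
    simp only [hσ.pow_apply, val_largeElt] at this
    have := this (Nat.le_add_right _ _) (Nat.le_add_right _ _)
    omega
  refine ⟨hmono, hanti, fun s => smallElt_lt_largeElt_rev_of_card_le hσ.injective hmono hanti s ?_⟩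
  have hpos : p (largeElt s.rev) ≠ 0 := fun h0 => by
    have := hσ.pow_apply (largeElt s.rev)
    rw [h0, pow_zero] at this
    exact smallElt_ne_largeElt _ _ this
  have hk : p (largeElt s.rev) + 1 ≤ Fintype.card (Fin (2 * n)) := hσ.lt_card _
  have := hcount (p (largeElt s.rev)) (Nat.pos_of_ne_zero hpos) (Nat.le_sub_one_of_lt (hlt _))
  rw [hσ.card_filter_pow_mem_range largeElt_injective le_iff_mem_range_largeElt hk,
    hσ.card_filter_pow_mem_range smallElt_injective lt_iff_mem_range_smallElt hk] at this
  simpa only [Nat.lt_succ_iff] using this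

end BallotPosition

/-- The sequences of column weights of Dyck matrices: `h j` is the number of nonzero entries of
column `j`. -/
structure IsDyckWeight {n : ℕ} (h : Fin n → ℕ) : Prop where
  antitone : Antitone h
  le : ∀ j, h j ≤ n
  rev_lt : ∀ j, (j.rev : ℕ) < h j

/-- The word with column weights `h` lists `h j` small elements before the large element of
column `j`; `weightPosition h x` is the place of `x` in it. -/
def weightPosition {n : ℕ} (h : Fin n → ℕ) (x : Fin (2 * n)) : ℕ :=
  if hx : (x : ℕ) < n then x + (Finset.univ.filter fun j => h j ≤ x).card
  else h ⟨x - n, by omega⟩ + x.rev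

section WeightPosition

variable {n : ℕ} {h : Fin n → ℕ}

theorem weightPosition_smallElt (h : Fin n → ℕ) (s : Fin n) :
    weightPosition h (smallElt s) = s + (Finset.univ.filter fun j => h j ≤ s).card :=
  dif_pos s.isLt

theorem weightPosition_largeElt (h : Fin n → ℕ) (j : Fin n) :
    weightPosition h (largeElt j) = h j + j.rev := by
  have hj : ¬ (largeElt j : ℕ) < n := by simp
  rw [weightPosition, dif_neg hj]
  simp only [val_largeElt, Fin.val_rev, Nat.add_sub_cancel_left, Fin.eta]
  omega

theorem weightPosition_injective : Function.Injective (weightPosition (n := n)) := by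
  intro h h' heq
  ext j
  have := congrFun heq (largeElt j)
  simpa only [weightPosition_largeElt, Nat.add_right_cancel_iff] using this

theorem weightPosition_smallElt_lt_largeElt (hanti : Antitone h) {s j : Fin n}
    (hs : (s : ℕ) < h j) : weightPosition h (smallElt s) < weightPosition h (largeElt j) := by
  have hsub : (Finset.univ.filter fun i => h i ≤ s) ⊆ Finset.Ioi j := fun i hi => by
    simp only [Finset.mem_filter, Finset.mem_univ, true_and] at hi
    exact Finset.mem_Ioi.2 (hanti.reflect_lt (hi.trans_lt hs))
  have := Finset.card_le_card hsub
  rw [Fin.card_Ioi] at this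
  rw [weightPosition_smallElt, weightPosition_largeElt, Fin.val_rev]
  omega

theorem weightPosition_largeElt_lt_smallElt (hanti : Antitone h) {s j : Fin n}
    (hs : h j ≤ s) : weightPosition h (largeElt j) < weightPosition h (smallElt s) := by
  have hsub : Finset.Ici j ⊆ Finset.univ.filter fun i => h i ≤ s := fun i hi => by
    simpa using (hanti (Finset.mem_Ici.1 hi)).trans hs
  have := Finset.card_le_card hsub
  rw [Fin.card_Ici] at this
  rw [weightPosition_smallElt, weightPosition_largeElt, Fin.val_rev]
  omega

theorem weightPosition_smallElt_lt_largeElt_iff (hanti : Antitone h) {s j : Fin n} :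
    weightPosition h (smallElt s) < weightPosition h (largeElt j) ↔ (s : ℕ) < h j :=
  ⟨fun hlt => not_le.1 fun hs => hlt.asymm (weightPosition_largeElt_lt_smallElt hanti hs),
    weightPosition_smallElt_lt_largeElt hanti⟩

theorem weightPosition_largeElt_add_one_eq_largeElt {i j : Fin n} (hij : (i : ℕ) + 1 = j)
    (hw : h j = h i) :
    weightPosition h (largeElt j) + 1 = weightPosition h (largeElt i) := by
  rw [weightPosition_largeElt, weightPosition_largeElt, hw, Fin.val_rev, Fin.val_rev]
  omega

theorem weightPosition_smallElt_add_one_eq_largeElt {s j : Fin n} (hanti : Antitone h)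
    (hs : (s : ℕ) + 1 = h j) (hlt : ∀ i, j < i → h i < h j) :
    weightPosition h (smallElt s) + 1 = weightPosition h (largeElt j) := by
  have hfilter : (Finset.univ.filter fun i => h i ≤ s) = Finset.Ioi j := by
    ext i
    simp only [Finset.mem_filter, Finset.mem_univ, true_and, Finset.mem_Ioi]
    exact ⟨fun hi => hanti.reflect_lt (by omega), fun hi => by have := hlt i hi; omega⟩
  rw [weightPosition_smallElt, weightPosition_largeElt, hfilter, Fin.card_Ioi, Fin.val_rev]
  omega

theorem weightPosition_largeElt_add_one_eq_smallElt {s j : Fin n} (hanti : Antitone h)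
    (hs : h j = s) (hlt : ∀ i < j, h j < h i) :
    weightPosition h (largeElt j) + 1 = weightPosition h (smallElt s) := by
  have hfilter : (Finset.univ.filter fun i => h i ≤ s) = Finset.Ici j := by
    ext i
    simp only [Finset.mem_filter, Finset.mem_univ, true_and, Finset.mem_Ici, ← hs]
    exact ⟨fun hi => not_lt.1 fun hij => (hlt i hij).not_ge hi, fun hi => hanti hi⟩
  rw [weightPosition_smallElt, weightPosition_largeElt, hfilter, Fin.card_Ici, Fin.val_rev]
  omega

theorem weightPosition_smallElt_add_one_eq_smallElt {s t : Fin n} (hts : (t : ℕ) + 1 = s)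
    (hne : ∀ j, h j ≠ s) :
    weightPosition h (smallElt t) + 1 = weightPosition h (smallElt s) := by
  have hfilter : (Finset.univ.filter fun j => h j ≤ t) = Finset.univ.filter fun j => h j ≤ s :=
    Finset.filter_congr fun j _ => by have := hne j; omega
  rw [weightPosition_smallElt, weightPosition_smallElt, hfilter]
  omega

namespace IsDyckWeight

theorem apply_zero (hh : IsDyckWeight h) (hn : 0 < n) : h ⟨0, hn⟩ = n := by
  have hle := hh.le ⟨0, hn⟩
  have hlt := hh.rev_lt ⟨0, hn⟩
  simp only [Fin.val_rev] at hlt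
  omega

theorem isBallotPosition_weightPosition (hh : IsDyckWeight h) :
    IsBallotPosition (weightPosition h) where
  strictMono_smallElt s t hst := by
    simp only [weightPosition_smallElt]
    refine Nat.add_lt_add_of_lt_of_le hst (Finset.card_le_card ?_)
    exact Finset.monotone_filter_right _ fun j _ hj => hj.trans hst.le
  strictAnti_largeElt i j hij := by
    simp only [weightPosition_largeElt]
    exact Nat.add_lt_add_of_le_of_lt (hh.antitone hij.le) (Fin.rev_lt_rev.2 hij)
  smallElt_lt_largeElt_rev s := by
    rw [weightPosition_smallElt_lt_largeElt_iff hh.antitone]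
    simpa using hh.rev_lt s.rev

theorem injective_weightPosition (hh : IsDyckWeight h) :
    Function.Injective (weightPosition h) := by
  have hballot := hh.isBallotPosition_weightPosition
  have hne (s j : Fin n) : weightPosition h (smallElt s) ≠ weightPosition h (largeElt j) :=
    (lt_or_ge (s : ℕ) (h j)).elim
      (fun hs => (weightPosition_smallElt_lt_largeElt hh.antitone hs).ne)
      (fun hs => (weightPosition_largeElt_lt_smallElt hh.antitone hs).ne')
  intro x y hxy
  obtain ⟨s, rfl⟩ | ⟨j, rfl⟩ := exists_eq_smallElt_or_largeElt x <;>
    obtain ⟨t, rfl⟩ | ⟨i, rfl⟩ := exists_eq_smallElt_or_largeElt y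
  · rw [hballot.strictMono_smallElt.injective hxy]
  · exact absurd hxy (hne s i)
  · exact absurd hxy.symm (hne t j)
  · rw [hballot.strictAnti_largeElt.injective hxy]

theorem weightPosition_lt (hh : IsDyckWeight h) (x : Fin (2 * n)) :
    weightPosition h x < 2 * n := by
  obtain ⟨s, rfl⟩ | ⟨j, rfl⟩ := exists_eq_smallElt_or_largeElt x
  · have hcard := Finset.card_filter_le Finset.univ fun j => h j ≤ s
    rw [Finset.card_fin] at hcard
    rw [weightPosition_smallElt]
    omega
  · have := hh.le j
    rw [weightPosition_largeElt]
    omega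

theorem weightPosition_zero (hh : IsDyckWeight h) (hn : 0 < n) :
    weightPosition h (smallElt ⟨0, hn⟩) = 0 := by
  have hempty : (Finset.univ.filter fun j => h j ≤ 0) = ∅ :=
    Finset.filter_eq_empty_iff.2 fun j _ => (Nat.zero_lt_of_lt (hh.rev_lt j)).not_ge
  rw [weightPosition_smallElt]
  simp only [hempty, Finset.card_empty]

end IsDyckWeight

theorem exists_perm_isOrbitPosition_weightPosition (hh : IsDyckWeight h) (hn : 0 < n) :
    ∃ σ, IsOrbitPosition σ (smallElt ⟨0, hn⟩) (weightPosition h) :=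
  exists_perm_isOrbitPosition hh.injective_weightPosition
    (by simpa using hh.weightPosition_lt) (hh.weightPosition_zero hn)

theorem IsBallotPosition.exists_isDyckWeight {p : Fin (2 * n) → ℕ} (hp : IsBallotPosition p)
    (hinj : Function.Injective p) (hlt : ∀ x, p x < 2 * n) :
    ∃ h : Fin n → ℕ, IsDyckWeight h ∧ weightPosition h = p := by
  let h (j : Fin n) : ℕ := (Finset.univ.filter fun s => p (smallElt s) < p (largeElt j)).card
  have hlt_iff (s j : Fin n) : (s : ℕ) < h j ↔ p (smallElt s) < p (largeElt j) :=
    Fin.lt_card_filter_univ_iff_apply_of_imp _ fun s t hts hs =>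
      (hp.strictMono_smallElt.monotone hts).trans_lt hs
  have hh : IsDyckWeight h :=
    { antitone := fun i j hij => Finset.card_le_card <|
        Finset.monotone_filter_right _ fun s _ hs =>
          hs.trans_le (hp.strictAnti_largeElt.antitone hij)
      le := fun j => (Finset.card_le_univ _).trans_eq (Fintype.card_fin n)
      rev_lt := fun j => by
        simpa only [hlt_iff, Fin.rev_rev] using hp.smallElt_lt_largeElt_rev j.rev }
  refine ⟨h, hh, eq_of_forall_lt_iff_lt hh.injective_weightPosition
    (by simpa using hh.weightPosition_lt) hinj (by simpa using hlt) ?_⟩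
  refine hh.isBallotPosition_weightPosition.lt_iff_lt hh.injective_weightPosition hp hinj
    fun s j => ?_
  rw [weightPosition_smallElt_lt_largeElt_iff hh.antitone, hlt_iff]

theorem SatisfiesConds.exists_isDyckWeight {hn : 0 < n} {σ : Equiv.Perm (Fin (2 * n))}
    (hσ : SatisfiesConds n hn σ) :
    ∃ h : Fin n → ℕ, IsDyckWeight h ∧ IsOrbitPosition σ (smallElt ⟨0, hn⟩) (weightPosition h) := by
  have hcycle (x : Fin (2 * n)) :
      ∃ k < Fintype.card (Fin (2 * n)), (σ ^ k) (smallElt ⟨0, hn⟩) = x := by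
    simpa using (hσ (smallElt ⟨0, hn⟩) rfl).1 x
  obtain ⟨p, hp⟩ := exists_isOrbitPosition_of_exists_pow_eq hcycle
  obtain ⟨h, hh, rfl⟩ := (hσ.isBallotPosition hp).exists_isDyckWeight hp.injective
    (by simpa using hp.lt_card)
  exact ⟨h, hh, hp⟩

end WeightPosition

/-- The number of nonzero entries of column `j`; for a Dyck matrix it is `ω(n + j + 1)`. -/
noncomputable def columnWeight {n : ℕ} (A : Matrix (Fin n) (Fin n) ℝ) (j : Fin n) : ℕ :=
  (Finset.univ.filter fun i => A i j ≠ 0).card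

/-- The matrix whose column `j` has its lowest `h j` entries equal to `1` and the others to `0`. -/
def matrixOfWeight {n : ℕ} (h : Fin n → ℕ) : Matrix (Fin n) (Fin n) ℝ :=
  Matrix.of fun i j => if (i.rev : ℕ) < h j then 1 else 0

section ColumnWeight

variable {n : ℕ} {A : Matrix (Fin n) (Fin n) ℝ} {h : Fin n → ℕ}

theorem matrixOfWeight_ne_zero_iff {i j : Fin n} :
    matrixOfWeight h i j ≠ 0 ↔ (i.rev : ℕ) < h j := by
  simp [matrixOfWeight]

theorem columnWeight_eq_card_rev (A : Matrix (Fin n) (Fin n) ℝ) (j : Fin n) :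
    columnWeight A j = (Finset.univ.filter fun r : Fin n => A r.rev j ≠ 0).card :=
  Finset.card_equiv Fin.revPerm (by simp)

theorem columnWeight_matrixOfWeight (hh : ∀ j, h j ≤ n) : columnWeight (matrixOfWeight h) = h := by
  ext j
  simp only [columnWeight_eq_card_rev, matrixOfWeight_ne_zero_iff, Fin.rev_rev,
    Fin.card_filter_val_lt, min_eq_right (hh j)]

theorem IsDyckWeight.isDyckMatrix_matrixOfWeight (hh : IsDyckWeight h) :
    IsDyckMatrix (matrixOfWeight h) := by
  refine ⟨fun i j => ?_, fun i j hji => if_pos ?_, fun i j i' j' hzero hi hj => ?_⟩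
  · simp only [matrixOfWeight, Matrix.of_apply]
    split_ifs <;> simp
  · exact (Fin.val_fin_le.2 (Fin.rev_le_rev.2 hji)).trans_lt (hh.rev_lt j)
  · contrapose! hzero
    rw [matrixOfWeight_ne_zero_iff] at hzero ⊢
    exact (Fin.val_fin_le.2 (Fin.rev_le_rev.2 hi)).trans_lt (hzero.trans_le (hh.antitone hj))

namespace IsDyckMatrix

theorem ne_zero_iff_rev_lt_columnWeight (hA : IsDyckMatrix A) (i j : Fin n) :
    A i j ≠ 0 ↔ (i.rev : ℕ) < columnWeight A j := by
  rw [columnWeight_eq_card_rev, Fin.lt_card_filter_univ_iff_apply_of_imp, Fin.rev_rev]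
  exact fun r s hsr => mt fun hs => hA.2.2 _ _ _ _ hs (Fin.rev_le_rev.2 hsr) le_rfl

theorem eq_matrixOfWeight (hA : IsDyckMatrix A) : A = matrixOfWeight (columnWeight A) := by
  ext i j
  have hiff := hA.ne_zero_iff_rev_lt_columnWeight i j
  simp only [matrixOfWeight, Matrix.of_apply, ← hiff]
  rcases hA.1 i j with h0 | h1
  · simp [h0]
  · simp [h1]

theorem isDyckWeight_columnWeight (hA : IsDyckMatrix A) : IsDyckWeight (columnWeight A) where
  antitone i j hij := Finset.card_le_card <| Finset.monotone_filter_right _ fun r _ =>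
    mt fun hr => hA.2.2 _ _ _ _ hr le_rfl hij
  le j := (Finset.card_le_univ _).trans_eq (Fintype.card_fin n)
  rev_lt j := by
    rw [← hA.ne_zero_iff_rev_lt_columnWeight, hA.2.1 j j le_rfl]
    exact one_ne_zero

end IsDyckMatrix

theorem colB_apply (A : Matrix (Fin n) (Fin n) ℝ) (j r : Fin n) :
    colB A (n + j + 1) r = (-1 : ℝ) ^ (r.rev : ℕ) * A r.rev j := by
  have hr : (r.rev : ℕ) = n - 1 - r := by rw [Fin.val_rev]; omega
  have hrow : (⟨n - 1 - r, by omega⟩ : Fin n) = r.rev := Fin.ext hr.symm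
  simp only [colB, psiMat, Matrix.of_apply, Nat.add_sub_cancel, Nat.add_sub_cancel_left,
    dif_pos (show n + (j : ℕ) < 2 * n by omega), dif_neg (show ¬ n + (j : ℕ) < n by omega),
    hrow, hr, Fin.eta]

theorem omegaB_eq_columnWeight (A : Matrix (Fin n) (Fin n) ℝ) (j : Fin n) :
    omegaB A (n + j + 1) = columnWeight A j := by
  have hne (r : Fin n) : colB A (n + j + 1) r ≠ 0 ↔ A r.rev j ≠ 0 := by
    rw [colB_apply, mul_ne_zero_iff, and_iff_right (pow_ne_zero _ (neg_ne_zero.2 one_ne_zero))]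
  rw [omegaB, if_neg (by omega), columnWeight_eq_card_rev]
  simp only [hne]

theorem IsDyckMatrix.colB_eq_iff (hA : IsDyckMatrix A) (i j : Fin n) :
    colB A (n + i + 1) = colB A (n + j + 1) ↔ columnWeight A i = columnWeight A j := by
  refine ⟨fun hcol => ?_, fun hw => ?_⟩
  · rw [← omegaB_eq_columnWeight, ← omegaB_eq_columnWeight, omegaB, omegaB, if_neg (by omega),
      if_neg (by omega), hcol]
  · ext r
    rw [colB_apply, colB_apply, hA.eq_matrixOfWeight]
    simp only [matrixOfWeight, Matrix.of_apply, hw]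

theorem IsDyckMatrix.mem_JSet_iff (hA : IsDyckMatrix A) {i j : Fin n} (hij : (i : ℕ) + 1 = j) :
    n + j + 1 ∈ JSet A ↔ columnWeight A j < columnWeight A i := by
  have hle : columnWeight A j ≤ columnWeight A i :=
    hA.isDyckWeight_columnWeight.antitone (Fin.le_def.2 (by omega))
  have hcol := hA.colB_eq_iff j i
  rw [lt_iff_le_and_ne, and_iff_right hle, ne_eq, ← hcol, show n + (i : ℕ) + 1 = n + j by omega]
  exact ⟨fun hJ => hJ.2.2, fun hne => ⟨by omega, by omega, hne⟩⟩

theorem IsDyckMatrix.mem_JSet_iff_forall_lt (hA : IsDyckMatrix A) {j : Fin n}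
    (hj : (j : ℕ) ≠ 0) :
    n + j + 1 ∈ JSet A ↔ ∀ i < j, columnWeight A j < columnWeight A i := by
  obtain ⟨i, hij⟩ : ∃ i : Fin n, (i : ℕ) + 1 = j := ⟨⟨j - 1, by omega⟩, by simp only; omega⟩
  rw [hA.mem_JSet_iff hij]
  refine ⟨fun hlt k hk => hlt.trans_le ?_, fun hlt => hlt i (Fin.lt_def.2 (by omega))⟩
  exact hA.isDyckWeight_columnWeight.antitone (Fin.le_def.2 (by omega))

theorem exists_eq_add_of_mem_JSet {w : ℕ} (hw : w ∈ JSet A) : ∃ j : Fin n, w = n + j + 1 := by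
  obtain ⟨hlow, hhigh, -⟩ := hw
  exact ⟨⟨w - (n + 1), by omega⟩, by simp only; omega⟩

end ColumnWeight

section Inverse

variable {n : ℕ} {A : Matrix (Fin n) (Fin n) ℝ}

theorem piA_smallElt_of_forall_columnWeight_ne {s : Fin n} (hs : (s : ℕ) ≠ 0)
    (hne : ∀ j, columnWeight A j ≠ s) : piA A (s + 1) = s := by
  rw [piA, if_neg (by omega), if_pos (by omega), dif_neg, Nat.add_sub_cancel]
  rintro ⟨w, hJ, hw⟩
  obtain ⟨j, rfl⟩ := exists_eq_add_of_mem_JSet hJ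
  exact hne j (by rwa [omegaB_eq_columnWeight] at hw)

namespace IsDyckMatrix

theorem piA_largeElt_of_columnWeight_eq (hA : IsDyckMatrix A) {i j : Fin n}
    (hij : (i : ℕ) + 1 = j) (hw : columnWeight A j = columnWeight A i) :
    piA A (n + i + 1) = n + j + 1 := by
  have hJ : n + j + 1 ∉ JSet A := by rw [hA.mem_JSet_iff hij, hw]; exact lt_irrefl _
  rw [← hij, ← add_assoc] at hJ
  rw [piA, if_neg (by omega), if_neg (by omega), if_pos (by omega), if_neg hJ]
  omega

theorem piA_largeElt_of_forall_columnWeight_lt (hA : IsDyckMatrix A) {j : Fin n}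
    (hlt : ∀ i, j < i → columnWeight A i < columnWeight A j) :
    piA A (n + j + 1) = columnWeight A j := by
  rw [piA, if_neg (by omega), if_neg (by omega)]
  split_ifs with hj hJ
  · exact omegaB_eq_columnWeight A j
  · have hmem : n + ((⟨j + 1, by omega⟩ : Fin n) : ℕ) + 1 ∈ JSet A :=
      (hA.mem_JSet_iff rfl).2 (hlt _ (Fin.lt_def.2 (Nat.lt_succ_self _)))
    exact absurd hmem hJ
  · rw [← omegaB_eq_columnWeight]
    congr 1
    omega

theorem exists_piA_smallElt_eq (hA : IsDyckMatrix A) {s i : Fin n}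
    (hs : (s : ℕ) ≠ 0) (hi : columnWeight A i = s) :
    ∃ j : Fin n, piA A (s + 1) = n + j + 1 ∧ columnWeight A j = s ∧
      ∀ k < j, columnWeight A j < columnWeight A k := by
  have hne_zero {j : Fin n} (hj : columnWeight A j = s) : (j : ℕ) ≠ 0 := fun h0 => by
    have hn := hA.isDyckWeight_columnWeight.apply_zero s.pos
    rw [← show j = ⟨0, s.pos⟩ from Fin.ext h0, hj] at hn
    exact s.isLt.ne hn
  have hJ : ∃ w, w ∈ JSet A ∧ omegaB A w = s + 1 - 1 := by
    obtain ⟨j, hj, hmin⟩ := wellFounded_lt.has_min {j : Fin n | columnWeight A j = s} ⟨i, hi⟩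
    refine ⟨n + j + 1, (hA.mem_JSet_iff_forall_lt (hne_zero hj)).2 fun k hk => ?_, ?_⟩
    · refine (hA.isDyckWeight_columnWeight.antitone hk.le).lt_of_ne fun heq => ?_
      exact hmin k (heq.symm.trans hj) hk
    · rw [omegaB_eq_columnWeight, Nat.add_sub_cancel]
      exact hj
  obtain ⟨hmem, hw⟩ := hJ.choose_spec
  obtain ⟨j, hj⟩ := exists_eq_add_of_mem_JSet hmem
  rw [hj] at hmem hw
  rw [omegaB_eq_columnWeight, Nat.add_sub_cancel] at hw
  refine ⟨j, ?_, hw, (hA.mem_JSet_iff_forall_lt (hne_zero hw)).1 hmem⟩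
  rw [piA, if_neg (by omega), if_pos (by omega), dif_pos hJ, hj]

theorem exists_piA_largeElt_eq_succ (hA : IsDyckMatrix A) (j : Fin n) :
    ∃ z : Fin (2 * n), piA A (largeElt j + 1) = z + 1 ∧
      weightPosition (columnWeight A) z + 1 = weightPosition (columnWeight A) (largeElt j) := by
  have hh := hA.isDyckWeight_columnWeight
  by_cases hlt : ∀ i, j < i → columnWeight A i < columnWeight A j
  · have hpos := hh.rev_lt j
    have hle := hh.le j
    have hs : columnWeight A j - 1 + 1 = columnWeight A j := by omega
    refine ⟨smallElt ⟨columnWeight A j - 1, by omega⟩, ?_,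
      weightPosition_smallElt_add_one_eq_largeElt hh.antitone hs hlt⟩
    exact (hA.piA_largeElt_of_forall_columnWeight_lt hlt).trans hs.symm
  · push Not at hlt
    obtain ⟨i, hji, hle⟩ := hlt
    let k : Fin n := ⟨j + 1, by omega⟩
    have hw : columnWeight A k = columnWeight A j :=
      (hh.antitone (Fin.le_def.2 (Nat.le_succ _))).antisymm
        (hle.trans (hh.antitone (Fin.le_def.2 hji)))
    exact ⟨largeElt k, hA.piA_largeElt_of_columnWeight_eq rfl hw,
      weightPosition_largeElt_add_one_eq_largeElt rfl hw⟩

theorem exists_piA_smallElt_eq_succ (hA : IsDyckMatrix A) {s : Fin n} (hs : (s : ℕ) ≠ 0) :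
    ∃ z : Fin (2 * n), piA A (smallElt s + 1) = z + 1 ∧
      weightPosition (columnWeight A) z + 1 = weightPosition (columnWeight A) (smallElt s) := by
  by_cases hex : ∃ i, columnWeight A i = s
  · obtain ⟨i, hi⟩ := hex
    obtain ⟨j, hpi, hj, hlt⟩ := hA.exists_piA_smallElt_eq hs hi
    exact ⟨largeElt j, hpi, weightPosition_largeElt_add_one_eq_smallElt
      hA.isDyckWeight_columnWeight.antitone hj hlt⟩
  · push Not at hex
    have hts : (s : ℕ) - 1 + 1 = s := by omega
    exact ⟨smallElt ⟨s - 1, by omega⟩,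
      (piA_smallElt_of_forall_columnWeight_ne hs hex).trans hts.symm,
      weightPosition_smallElt_add_one_eq_smallElt hts hex⟩

theorem exists_piA_one_eq_succ (hA : IsDyckMatrix A) (hn : 0 < n) :
    ∃ z : Fin (2 * n), piA A 1 = z + 1 ∧ weightPosition (columnWeight A) z + 1 = 2 * n := by
  refine ⟨largeElt ⟨0, hn⟩, if_pos rfl, ?_⟩
  rw [weightPosition_largeElt, hA.isDyckWeight_columnWeight.apply_zero, Fin.val_rev]
  simp only
  omega

theorem exists_piA_eq_succ (hA : IsDyckMatrix A) (hn : 0 < n) (y : Fin (2 * n)) :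
    ∃ z : Fin (2 * n), piA A (y + 1) = z + 1 ∧ weightPosition (columnWeight A) z + 1 =
      if y = smallElt ⟨0, hn⟩ then 2 * n else weightPosition (columnWeight A) y := by
  split_ifs with hy
  · subst hy
    exact hA.exists_piA_one_eq_succ hn
  · obtain ⟨s, rfl⟩ | ⟨j, rfl⟩ := exists_eq_smallElt_or_largeElt y
    · exact hA.exists_piA_smallElt_eq_succ fun hs => hy (Fin.ext hs)
    · exact hA.exists_piA_largeElt_eq_succ j

theorem piA_eq_succ_iff (hA : IsDyckMatrix A) (hn : 0 < n) {x y : Fin (2 * n)} :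
    piA A (y + 1) = x + 1 ↔ weightPosition (columnWeight A) x + 1 =
      if y = smallElt ⟨0, hn⟩ then 2 * n else weightPosition (columnWeight A) y := by
  obtain ⟨z, hz, hpos⟩ := hA.exists_piA_eq_succ hn y
  rw [hz, ← hpos, Nat.add_right_cancel_iff, Nat.add_right_cancel_iff, ← Fin.ext_iff, eq_comm,
    hA.isDyckWeight_columnWeight.injective_weightPosition.eq_iff]

theorem isOrbitPosition_weightPosition_iff (hA : IsDyckMatrix A) (hn : 0 < n)
    {σ : Equiv.Perm (Fin (2 * n))} :
    IsOrbitPosition σ (smallElt ⟨0, hn⟩) (weightPosition (columnWeight A)) ↔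
      ∀ x, piA A (σ x + 1) = x + 1 := by
  rw [isOrbitPosition_iff, and_iff_right (hA.isDyckWeight_columnWeight.weightPosition_zero hn),
    Fintype.card_fin]
  exact forall_congr' fun x => (hA.piA_eq_succ_iff hn).symm

end IsDyckMatrix

end Inverse

/-- The map `A ↦ π_A⁻¹` is a bijection from `n × n` Dyck matrices onto permutations of
`{1,…,2n}` satisfying conditions (1)–(2).  Here `σ` (on `Fin (2n)`, element `x` representing
`x+1`) is the inverse of `π_A` precisely when `π_A(σ(x)) = x` for all `x`. -/
theorem dyckMatrix_to_inverse_piA_bijective (n : ℕ) (hn : 0 < n) :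
    (∀ A : Matrix (Fin n) (Fin n) ℝ, IsDyckMatrix A →
      ∃ σ : Equiv.Perm (Fin (2 * n)), SatisfiesConds n hn σ ∧
        ∀ x : Fin (2 * n), piA A ((σ x : ℕ) + 1) = (x : ℕ) + 1) ∧
    (∀ σ : Equiv.Perm (Fin (2 * n)), SatisfiesConds n hn σ →
      ∃! A : Matrix (Fin n) (Fin n) ℝ, IsDyckMatrix A ∧
        ∀ x : Fin (2 * n), piA A ((σ x : ℕ) + 1) = (x : ℕ) + 1) := by
  constructor
  · intro A hA
    have hh := hA.isDyckWeight_columnWeight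
    obtain ⟨σ, hσ⟩ := exists_perm_isOrbitPosition_weightPosition hh hn
    exact ⟨σ, hh.isBallotPosition_weightPosition.satisfiesConds hn hσ,
      (hA.isOrbitPosition_weightPosition_iff hn).1 hσ⟩
  · intro σ hσ
    obtain ⟨h, hh, hpos⟩ := hσ.exists_isDyckWeight
    have hA := hh.isDyckMatrix_matrixOfWeight
    refine ⟨matrixOfWeight h, ⟨hA, (hA.isOrbitPosition_weightPosition_iff hn).1 ?_⟩, ?_⟩
    · rwa [columnWeight_matrixOfWeight hh.le]
    · rintro A ⟨hA, hinv⟩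
      have hpos' := (hA.isOrbitPosition_weightPosition_iff hn).2 hinv
      rw [hA.eq_matrixOfWeight, weightPosition_injective (hpos'.unique hpos)]
end
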